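/- arXiv:2509.06692 — 9 statements merged into one kernel-verified Lean document; each statement's English description precedes it below -/
import Mathlib

section
/- For every integer q ≥ 2 and every integer n ≥ 1, the maximum value of dist(x,y) over all pairs of strings x, y ∈ Z_q^n with dist(x,y) < ∞ equals n − 1. -/
/-!
Upper bound: suppose transpositions at `K` applied to `x` and at `L` applied to `y` give the same
string. A location common to `K` and `L` can be dropped from both, since it makes `x` and `y` agree
at the two positions it touches. So `K` and `L` may be replaced by the disjoint sets `K \ L` and
`L \ K` of locations in `{0, …, n - 2}`, which have at most `n - 1` elements together
(`tdist_le_of_apply`).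

Attainment: a transposition at `k` changes only the sum of the first `k + 1` symbols among all prefix
sums. Hence if the prefix sums of `x` and `y` differ at every proper nonempty prefix, each of the
`n - 1` locations must be used on one of the two sides (`prefix_sum_eq` makes this precise). Such a
pair at finite distance comes from the alternating string `0101…`, by swapping at all even locations
to get `strX`, and at all odd locations to get `strY`.
-/

/-- Valid locations (0-indexed) for simultaneous disjoint transpositions in a string of
length `n`: each location `k` swaps positions `k` and `k+1`, and distinct locations
are at distance at least 2. -/
def ValidLocs (n : ℕ) (K : Finset ℕ) : Prop :=
  (∀ k ∈ K, k + 1 < n) ∧ ∀ k ∈ K, ∀ l ∈ K, k ≠ l → k + 2 ≤ l ∨ l + 2 ≤ k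

/-- `y` is the result of applying the transpositions at the locations in `K` to `x`. -/
def ApplyLocs {n q : ℕ} (K : Finset ℕ) (x y : Fin n → Fin q) : Prop :=
  ∀ i : Fin n, y i =
    if h : (i : ℕ) ∈ K ∧ (i : ℕ) + 1 < n then x ⟨(i : ℕ) + 1, h.2⟩
    else if (i : ℕ) ≠ 0 ∧ (i : ℕ) - 1 ∈ K then
      x ⟨(i : ℕ) - 1, lt_of_le_of_lt (Nat.sub_le _ _) i.isLt⟩
    else x i

/-- `B(x;t)`: the set of strings obtainable from `x` by at most `t` disjoint transpositions. -/
def BallB {n q : ℕ} (t : ℕ) (x : Fin n → Fin q) : Set (Fin n → Fin q) :=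
  { y | ∃ K : Finset ℕ, K.card ≤ t ∧ ValidLocs n K ∧ ApplyLocs K x y }

/-- `dist(x,y) = min { t + s : B(x;t) ∩ B(y;s) ≠ ∅ }`, equal to `⊤` if no such `t,s` exist. -/
noncomputable def tdist {n q : ℕ} (x y : Fin n → Fin q) : ℕ∞ :=
  sInf { d : ℕ∞ | ∃ t s : ℕ, d = ((t + s : ℕ) : ℕ∞) ∧ (BallB t x ∩ BallB s y).Nonempty }

/-- A code `C` corrects `t` transpositions. -/
def Corrects {n q : ℕ} (t : ℕ) (C : Set (Fin n → Fin q)) : Prop :=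
  ∀ x ∈ C, ∀ x' ∈ C, x ≠ x' → BallB t x ∩ BallB t x' = ∅

/-- The number of runs of identical consecutive symbols in a string. -/
def runCount {n q : ℕ} (x : Fin n → Fin q) : ℕ :=
  if n = 0 then 0
  else 1 + (Finset.univ.filter (fun i : Fin (n - 1) =>
      x ⟨(i : ℕ), by have := i.isLt; omega⟩ ≠ x ⟨(i : ℕ) + 1, by have := i.isLt; omega⟩)).card

/-- Transpositions at locations common to both sides cancel, which bounds the distance. -/
lemma tdist_le_of_apply {n q : ℕ} {x y z : Fin n → Fin q} {K L : Finset ℕ}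
    (hK : ValidLocs n K) (hL : ValidLocs n L) (hx : ApplyLocs K x z) (hy : ApplyLocs L y z) :
    tdist x y ≤ ((n - 1 : ℕ) : ℕ∞) := by
  classical
  have hvalid : ∀ {A B : Finset ℕ}, ValidLocs n A → ValidLocs n (A \ B) := by
    intro A B hA
    exact ⟨fun k hk => hA.1 k (Finset.mem_sdiff.1 hk).1, fun k hk l hl =>
      hA.2 k (Finset.mem_sdiff.1 hk).1 l (Finset.mem_sdiff.1 hl).1⟩
  have hcard : (K \ L).card + (L \ K).card ≤ n - 1 := by
    rw [← Finset.card_union_of_disjoint disjoint_sdiff_sdiff]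
    calc _ ≤ (Finset.range (n - 1)).card := by
          apply Finset.card_le_card
          intro k hk
          have : k + 1 < n := by
            rcases Finset.mem_union.1 hk with h | h
            · exact hK.1 k (Finset.mem_sdiff.1 h).1
            · exact hL.1 k (Finset.mem_sdiff.1 h).1
          rw [Finset.mem_range]; omega
      _ = n - 1 := Finset.card_range _
  refine le_trans (sInf_le ⟨(K \ L).card, (L \ K).card, rfl, ?_⟩) (by exact_mod_cast hcard)
  -- the common string: apply the locations of `K \ L` to `x`
  refine ⟨fun i =>
    if h : (i : ℕ) ∈ K \ L ∧ (i : ℕ) + 1 < n then x ⟨(i : ℕ) + 1, h.2⟩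
    else if (i : ℕ) ≠ 0 ∧ (i : ℕ) - 1 ∈ K \ L then
      x ⟨(i : ℕ) - 1, lt_of_le_of_lt (Nat.sub_le _ _) i.isLt⟩
    else x i, ⟨K \ L, le_rfl, hvalid hK, fun i => rfl⟩, ⟨L \ K, le_rfl, hvalid hL, ?_⟩⟩
  rintro ⟨i, hi⟩
  have hxi := hx ⟨i, hi⟩
  have hyi := hy ⟨i, hi⟩
  simp only [Finset.mem_sdiff] at *
  have adj : ∀ {A : Finset ℕ}, ValidLocs n A → ∀ k, k ∈ A → k + 1 ∉ A := by
    intro A hA k hk hk'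
    have := hA.2 k hk (k + 1) hk' (by omega)
    omega
  have hlt : ∀ k, k ∈ K ∨ k ∈ L → k + 1 < n := fun k hk => hk.elim (hK.1 k) (hL.1 k)
  -- value of `x` and `y` at `i` when `i` is a common location: read off at `i + 1`
  have common : ∀ (h : i ∈ K ∧ i ∈ L), x ⟨i, hi⟩ = y ⟨i, hi⟩ := by
    rintro ⟨h1, h2⟩
    have a := hx ⟨i + 1, hK.1 i h1⟩
    have b := hy ⟨i + 1, hK.1 i h1⟩
    have c1 := adj hK i h1
    have c2 := adj hL i h2
    simp [h1, c1] at a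
    simp [h2, c2] at b
    rw [← a, ← b]
  -- the same at `i` when `i - 1` is a common location: read off at `i - 1`
  have common' : ∀ (h : i - 1 ∈ K ∧ i - 1 ∈ L), i ≠ 0 → x ⟨i, hi⟩ = y ⟨i, hi⟩ := by
    rintro ⟨h1, h2⟩ h0
    obtain ⟨j, rfl⟩ := Nat.exists_eq_succ_of_ne_zero h0
    simp only [Nat.succ_eq_add_one, Nat.add_sub_cancel] at h1 h2
    have a := hx ⟨j, by omega⟩
    have b := hy ⟨j, by omega⟩
    simp [h1, hi] at a
    simp [h2, hi] at b
    rw [← a, ← b]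
  rcases Nat.eq_zero_or_pos i with rfl | hpos
  · have hlt0 := hlt 0
    grind
  · obtain ⟨j, rfl⟩ := Nat.exists_eq_succ_of_ne_zero hpos.ne'
    have k1 := adj hK j
    have k2 := adj hL j
    have hlt0 := hlt (j + 1)
    simp only [Nat.succ_eq_add_one, Nat.add_sub_cancel] at *
    clear hx hy hK hL adj hvalid hcard hlt
    grind

/-- A string read as an integer-valued sequence, extended by `0` beyond its length. -/
def toSeq {n q : ℕ} (x : Fin n → Fin q) (i : ℕ) : ℤ :=
  if h : i < n then ((x ⟨i, h⟩ : ℕ) : ℤ) else 0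

/-- The effect of transpositions on prefix sums: the prefix of length `m` is affected only by a
transposition at location `m - 1`, across its boundary. -/
lemma prefix_sum_eq {n q : ℕ} {x z : Fin n → Fin q} {K : Finset ℕ}
    (hK : ValidLocs n K) (hx : ApplyLocs K x z) (m : ℕ) (hm : m ≤ n) :
    ∑ i ∈ Finset.range m, toSeq z i = ∑ i ∈ Finset.range m, toSeq x i +
      if m ≠ 0 ∧ m - 1 ∈ K then toSeq x m - toSeq x (m - 1) else 0 := by
  induction m with
  | zero => simp
  | succ m ih =>
    rw [Finset.sum_range_succ, Finset.sum_range_succ, ih (by omega)]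
    have hlt := hK.1 m
    have hadj : m ≠ 0 → m - 1 ∈ K → m ∉ K := by
      intro h0 h1 h2
      have := hK.2 _ h1 _ h2 (by omega)
      omega
    have hz : toSeq z m = if m ∈ K then toSeq x (m + 1)
        else if m ≠ 0 ∧ m - 1 ∈ K then toSeq x (m - 1) else toSeq x m := by
      have h := hx ⟨m, by omega⟩
      simp only at h
      unfold toSeq
      rw [dif_pos (show m < n by omega), h]
      grind
    rw [hz]
    simp only [Nat.add_sub_cancel]
    grind

/-- The string `1010…`, with last symbol `0`. -/
def strX (q n : ℕ) (hq : 2 ≤ q) (i : Fin n) : Fin q :=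
  if (i : ℕ) % 2 = 0 ∧ (i : ℕ) + 1 < n then ⟨1, by omega⟩ else ⟨0, by omega⟩

/-- The string `00101…`, with last symbol `1` if `n ≥ 2`; it agrees with `strX` except at the two
ends. -/
def strY (q n : ℕ) (hq : 2 ≤ q) (i : Fin n) : Fin q :=
  if (i : ℕ) ≠ 0 ∧ ((i : ℕ) % 2 = 0 ∨ (i : ℕ) + 1 = n) then ⟨1, by omega⟩ else ⟨0, by omega⟩

/-- The alternating string `0101…`, one round of transpositions away from both `strX` and `strY`. -/
def strZ (q n : ℕ) (hq : 2 ≤ q) (i : Fin n) : Fin q :=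
  if (i : ℕ) % 2 = 0 then ⟨0, by omega⟩ else ⟨1, by omega⟩

lemma prefix_sum_strX (q n : ℕ) (hq : 2 ≤ q) (m : ℕ) (hm : m + 1 < n) :
    ∑ i ∈ Finset.range (m + 1), toSeq (strX q n hq) i =
      ∑ i ∈ Finset.range (m + 1), toSeq (strY q n hq) i + 1 := by
  induction m with
  | zero => simp [toSeq, strX, strY, hm, show 0 < n by omega]
  | succ m ih =>
    rw [Finset.sum_range_succ, Finset.sum_range_succ _ (m + 1), ih (by omega)]
    have : toSeq (strX q n hq) (m + 1) = toSeq (strY q n hq) (m + 1) := by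
      simp [toSeq, strX, strY, hm, show m + 1 < n by omega, show m + 1 + 1 ≠ n by omega]
    rw [this]; ring

lemma validLocs_parity (n r : ℕ) : ValidLocs n ((Finset.range (n - 1)).filter (· % 2 = r)) := by
  constructor
  · intro k hk
    simp only [Finset.mem_filter, Finset.mem_range] at hk
    omega
  · intro k hk l hl h
    simp only [Finset.mem_filter, Finset.mem_range] at hk hl
    omega

lemma apply_strX (q n : ℕ) (hq : 2 ≤ q) :
    ApplyLocs ((Finset.range (n - 1)).filter (· % 2 = 0)) (strX q n hq) (strZ q n hq) := by
  rintro ⟨i, hi⟩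
  simp only [Finset.mem_filter, Finset.mem_range, strX, strZ]
  split_ifs <;> first | rfl | (exfalso; omega)

lemma apply_strY (q n : ℕ) (hq : 2 ≤ q) :
    ApplyLocs ((Finset.range (n - 1)).filter (· % 2 = 1)) (strY q n hq) (strZ q n hq) := by
  rintro ⟨i, hi⟩
  simp only [Finset.mem_filter, Finset.mem_range, strY, strZ]
  split_ifs <;> first | rfl | (exfalso; omega)

theorem stmt0 (q n : ℕ) (hq : 2 ≤ q) (hn : 1 ≤ n) :
    IsGreatest { d : ℕ∞ | ∃ x y : Fin n → Fin q, tdist x y = d ∧ d ≠ ⊤ }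
      (((n - 1 : ℕ) : ℕ∞)) := by
  classical
  constructor
  · refine ⟨strX q n hq, strY q n hq, le_antisymm ?_ ?_, ENat.natCast_ne_top _⟩
    · exact tdist_le_of_apply (validLocs_parity n 0) (validLocs_parity n 1)
        (apply_strX q n hq) (apply_strY q n hq)
    · refine le_sInf ?_
      rintro d ⟨t, s, rfl, z, ⟨K, hKt, hK, hx⟩, ⟨L, hLs, hL, hy⟩⟩
      -- an unused location `k` would make the prefix sums of length `k + 1` equal
      have hsub : Finset.range (n - 1) ⊆ K ∪ L := by
        intro k hk
        rw [Finset.mem_range] at hk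
        by_contra hc
        simp only [Finset.mem_union, not_or] at hc
        have a := prefix_sum_eq hK hx (k + 1) (by omega)
        have b := prefix_sum_eq hL hy (k + 1) (by omega)
        have c := prefix_sum_strX q n hq k (by omega)
        simp only [Nat.add_sub_cancel, hc.1, hc.2, and_false, if_false] at a b
        omega
      have h1 := Finset.card_le_card hsub
      have h2 := Finset.card_union_le K L
      rw [Finset.card_range] at h1
      exact_mod_cast (by omega : n - 1 ≤ t + s)
  · rintro d ⟨x, y, rfl, hd⟩
    have hne : { d : ℕ∞ | ∃ t s : ℕ, d = ((t + s : ℕ) : ℕ∞) ∧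
        (BallB t x ∩ BallB s y).Nonempty }.Nonempty := by
      by_contra hc
      rw [Set.not_nonempty_iff_eq_empty] at hc
      exact hd (by rw [tdist, hc, sInf_empty])
    obtain ⟨_, t, s, -, z, ⟨K, -, hK, hx⟩, ⟨L, -, hL, hy⟩⟩ := hne
    exact tdist_le_of_apply hK hL hx hy
end

section
/- Fix integers n ≥ 1, q ≥ 2, s_1, s_2, and an odd prime p ≥ max{q, n}. Let C_q(n) = { x ∈ Z_q^n : Σ_{i=1}^n i·x_i ≡ s_1 (mod 2q−1) and Σ_{i=1}^n i²·x_i ≡ s_2 (mod p) }. If C_q(n) is nonempty, then C_q(n) corrects one transposition. -/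
/-- A string within one transposition of `y` is `y + a (e_{k+1} - e_k)` for a location `k` and a
jump `a` with `|a| < q`. When nothing is transposed, `a = 0` and `k = 0`, which need not be a legal
location (hence the disjunction). -/
lemma exists_shift_of_mem_ballB {n q : ℕ} (hn : 1 ≤ n) (hq : 2 ≤ q) {x y : Fin n → Fin q}
    (h : y ∈ BallB 1 x) :
    ∃ (k : ℕ) (a : ℤ), k < n ∧ |a| < q ∧ (a = 0 ∨ k + 1 < n) ∧
      ∀ i : Fin n, ((x i : ℕ) : ℤ) = ((y i : ℕ) : ℤ) +
        ((if (i : ℕ) = k + 1 then a else 0) - (if (i : ℕ) = k then a else 0)) := by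
  obtain ⟨K, hcard, hvalid, happ⟩ := h
  rcases Finset.card_le_one_iff_subset_singleton.mp hcard with ⟨k, hk⟩
  rcases Finset.subset_singleton_iff.mp hk with rfl | rfl
  · refine ⟨0, 0, by omega, by simp; omega, Or.inl rfl, fun i => ?_⟩
    have := happ i
    simp at this
    simp [this]
  · have hk1 : k + 1 < n := hvalid.1 k (by simp)
    have y0 : y ⟨k, by omega⟩ = x ⟨k + 1, hk1⟩ := by
      have := happ ⟨k, by omega⟩
      simpa [hk1] using this
    have y1 : y ⟨k + 1, hk1⟩ = x ⟨k, by omega⟩ := by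
      have := happ ⟨k + 1, hk1⟩
      simpa using this
    refine ⟨k, ((y ⟨k, by omega⟩ : ℕ) : ℤ) - ((y ⟨k + 1, hk1⟩ : ℕ) : ℤ), by omega, ?_,
      Or.inr hk1, fun i => ?_⟩
    · have h0 := (y ⟨k, by omega⟩).isLt
      have h1 := (y ⟨k + 1, hk1⟩).isLt
      rw [abs_lt]
      omega
    · obtain ⟨i, hi⟩ := i
      by_cases e0 : i = k
      · subst e0
        simp [y0, y1]
      · by_cases e1 : i = k + 1
        · subst e1
          simp [y0, y1]
        · have := happ ⟨i, hi⟩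
          have hne : ¬ (i ≠ 0 ∧ i - 1 = k) := by omega
          simp only [Finset.mem_singleton, e0, false_and, dite_false, hne, if_false] at this
          simp [this, e0, e1]

lemma sum_shift {n : ℕ} {f g : Fin n → ℤ} {k : ℕ} {a : ℤ} (hk : k < n)
    (ha : a = 0 ∨ k + 1 < n)
    (h : ∀ i : Fin n, f i = g i +
      ((if (i : ℕ) = k + 1 then a else 0) - (if (i : ℕ) = k then a else 0)))
    (w : ℕ → ℤ) :
    ∑ i : Fin n, w i * f i = ∑ i : Fin n, w i * g i + (w (k + 1) - w k) * a := by
  rcases ha with rfl | hk1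
  · simp [h]
  · have key : ∀ m, m < n →
        ∑ i : Fin n, w i * (if (i : ℕ) = m then a else 0) = w m * a := by
      intro m hm
      rw [Finset.sum_eq_single ⟨m, hm⟩]
      · simp
      · intro b _ hb
        have : (b : ℕ) ≠ m := fun e => hb (Fin.ext e)
        simp [this]
      · simp
    simp only [h, mul_add, mul_sub, Finset.sum_add_distrib, Finset.sum_sub_distrib,
      key _ hk, key _ hk1]
    ring

theorem stmt3 (n q : ℕ) (hn : 1 ≤ n) (hq : 2 ≤ q) (s₁ s₂ : ℤ)
    (p : ℕ) (hp : p.Prime) (hodd : Odd p) (hpq : q ≤ p) (hpn : n ≤ p)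
    (C : Set (Fin n → Fin q))
    (hC : C = { x : Fin n → Fin q |
      (∑ i : Fin n, ((i : ℤ) + 1) * ((x i : ℕ) : ℤ)) ≡ s₁ [ZMOD (2 * (q : ℤ) - 1)] ∧
      (∑ i : Fin n, ((i : ℤ) + 1) ^ 2 * ((x i : ℕ) : ℤ)) ≡ s₂ [ZMOD (p : ℤ)] })
    (hne : C.Nonempty) :
    Corrects 1 C := by
  intro x hx x' hx' hne'
  rw [Set.eq_empty_iff_forall_notMem]
  rintro y ⟨hy, hy'⟩
  apply hne'
  subst hC
  obtain ⟨k, a, hk, ha, hka, hxa⟩ := exists_shift_of_mem_ballB hn hq hy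
  obtain ⟨l, b, hl, hb, hlb, hxb⟩ := exists_shift_of_mem_ballB hn hq hy'
  have h1 := (hx.1.trans hx'.1.symm).dvd
  have h2 := (hx.2.trans hx'.2.symm).dvd
  have ea1 := sum_shift hk hka hxa (fun i => (i : ℤ) + 1)
  have eb1 := sum_shift hl hlb hxb (fun i => (i : ℤ) + 1)
  have ea2 := sum_shift hk hka hxa (fun i => ((i : ℤ) + 1) ^ 2)
  have eb2 := sum_shift hl hlb hxb (fun i => ((i : ℤ) + 1) ^ 2)
  rw [ea1, eb1] at h1
  rw [ea2, eb2] at h2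
  push_cast at h1 h2
  rw [abs_lt] at ha hb
  have hab : b = a := by
    have hd : (2 * (q : ℤ) - 1) ∣ b - a := by
      convert h1 using 1
      ring
    have := Int.eq_zero_of_abs_lt_dvd hd (by rw [abs_lt]; omega)
    omega
  subst hab
  have hd : (p : ℤ) ∣ 2 * (((l : ℤ) - k) * b) := by
    convert h2 using 1
    ring
  have hpz : Prime (p : ℤ) := Nat.prime_iff_prime_int.mp hp
  have hcase : b = 0 ∨ k = l := by
    rcases hpz.dvd_or_dvd hd with h | h
    · have h' : p ∣ 2 := by exact_mod_cast h
      have := Nat.le_of_dvd (by norm_num) h'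
      have := hp.two_le
      have hp2 : p = 2 := by omega
      subst hp2
      exact absurd hodd (by decide)
    · rcases hpz.dvd_or_dvd h with h | h
      · right
        have := Int.eq_zero_of_abs_lt_dvd h (by rw [abs_lt]; omega)
        omega
      · left
        exact Int.eq_zero_of_abs_lt_dvd h (by rw [abs_lt]; omega)
  funext i
  have e1 := hxa i
  have e2 := hxb i
  apply Fin.ext
  rcases hcase with rfl | rfl
  · simp only [ite_self] at e1 e2
    omega
  · rw [← e2] at e1
    exact_mod_cast e1
end

section
/- Let n ≥ 2 be even, let B(n/2) ⊆ Z_2^{n/2} be a binary code with minimum Hamming distance at least 3, and fix s ∈ {0,1}. Let C'(n) = { x ∈ Z_2^n : (x_2, x_4, ..., x_n) ∈ B(n/2) and Σ_{i=1}^{n/2} i·(x_{2i} − x_{2i−1}) ≡ s (mod 2) }. If C'(n) is nonempty, then C'(n) corrects one transposition. -/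
/-- `y` arises from `x` by a nontrivial transposition, described by parity of positions: the symbols
that change are exactly those at the odd position `2j+1` and at the neighbouring even position `m`.
-/
def FlipsPair {n : ℕ} (x y : Fin n → Fin 2) (j m : ℕ) : Prop :=
  2 * j + 1 < n ∧ m < n ∧ (m = 2 * j ∨ m = 2 * j + 2) ∧
    ∀ i : Fin n, y i ≠ x i ↔ ((i : ℕ) = 2 * j + 1 ∨ (i : ℕ) = m)

lemma ball_one_cases {n : ℕ} {x y : Fin n → Fin 2} (h : y ∈ BallB 1 x) :
    y = x ∨ ∃ j m, FlipsPair x y j m := by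
  obtain ⟨K, hcard, ⟨hlt, -⟩, hap⟩ := h
  by_cases hyx : y = x
  · exact Or.inl hyx
  right
  rcases Nat.le_one_iff_eq_zero_or_eq_one.mp hcard with h0 | h1
  · exfalso
    apply hyx
    funext i
    have := hap i
    rw [Finset.card_eq_zero] at h0
    simpa [h0] using this
  obtain ⟨k, rfl⟩ := Finset.card_eq_one.mp h1
  have hk : k + 1 < n := hlt k (by simp)
  have hyk : y ⟨k, by omega⟩ = x ⟨k + 1, hk⟩ := by
    have := hap ⟨k, by omega⟩
    simpa [hk] using this
  have hyk1 : y ⟨k + 1, hk⟩ = x ⟨k, by omega⟩ := by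
    have := hap ⟨k + 1, hk⟩
    simpa using this
  have hother : ∀ i : Fin n, (i : ℕ) ≠ k → (i : ℕ) ≠ k + 1 → y i = x i := by
    intro i h1 h2
    have := hap i
    rw [dif_neg (by simp [h1]), if_neg (by simp; omega)] at this
    exact this
  have hne : x ⟨k, by omega⟩ ≠ x ⟨k + 1, hk⟩ := by
    intro he
    apply hyx
    funext i
    by_cases h1 : (i : ℕ) = k
    · obtain rfl : i = ⟨k, Nat.lt_of_succ_lt hk⟩ := Fin.ext h1
      rw [hyk, he]
    by_cases h2 : (i : ℕ) = k + 1
    · obtain rfl : i = ⟨k + 1, hk⟩ := Fin.ext h2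
      rw [hyk1, he]
    exact hother i h1 h2
  have hflip : ∀ i : Fin n, y i ≠ x i ↔ ((i : ℕ) = k ∨ (i : ℕ) = k + 1) := by
    intro i
    constructor
    · intro h
      by_contra hc
      push Not at hc
      exact h (hother i hc.1 hc.2)
    · rintro (h1 | h2)
      · obtain rfl : i = ⟨k, Nat.lt_of_succ_lt hk⟩ := Fin.ext h1
        rw [hyk]
        exact hne.symm
      · obtain rfl : i = ⟨k + 1, hk⟩ := Fin.ext h2
        rw [hyk1]
        exact hne
  rcases Nat.even_or_odd' k with ⟨j, rfl | rfl⟩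
  · exact ⟨j, 2 * j, hk, by omega, Or.inl rfl, fun i => by rw [hflip]; omega⟩
  · exact ⟨j, 2 * j + 2, by omega, hk, Or.inr rfl, fun i => by rw [hflip]⟩

/-- The symbols at the odd 0-indexed positions. -/
def oddSlots {n : ℕ} (x : Fin n → Fin 2) : Fin (n / 2) → Fin 2 :=
  fun j => x ⟨2 * (j : ℕ) + 1, by have := j.isLt; omega⟩

lemma hammingDist_oddSlots_le {n : ℕ} {x y : Fin n → Fin 2}
    (h : y = x ∨ ∃ j m, FlipsPair x y j m) : hammingDist (oddSlots y) (oddSlots x) ≤ 1 := by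
  rcases h with rfl | ⟨j, m, -, -, hm, hf⟩
  · simp
  · rw [hammingDist, Finset.card_le_one]
    intro a ha b hb
    simp only [Finset.mem_filter, Finset.mem_univ, true_and, oddSlots, hf] at ha hb
    apply Fin.ext
    omega

theorem stmt4 (n : ℕ) (hn : 2 ≤ n) (hev : n % 2 = 0)
    (B : Set (Fin (n / 2) → Fin 2))
    (hB : ∀ u ∈ B, ∀ v ∈ B, u ≠ v → 3 ≤ hammingDist u v)
    (s : ℤ) (hs : s = 0 ∨ s = 1)
    (C : Set (Fin n → Fin 2))
    (hC : C = { x : Fin n → Fin 2 |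
      (fun j : Fin (n / 2) => x ⟨2 * (j : ℕ) + 1, by have := j.isLt; omega⟩) ∈ B ∧
      (∑ j : Fin (n / 2), ((j : ℤ) + 1) *
          (((x ⟨2 * (j : ℕ) + 1, by have := j.isLt; omega⟩ : ℕ) : ℤ) -
           ((x ⟨2 * (j : ℕ), by have := j.isLt; omega⟩ : ℕ) : ℤ))) ≡ s [ZMOD 2] })
    (hne : C.Nonempty) :
    Corrects 1 C := by
  subst hC
  rintro x ⟨hxB, hxs⟩ x' ⟨hxB', hxs'⟩ hxx
  rw [Set.eq_empty_iff_forall_notMem]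
  rintro y ⟨hy, hy'⟩
  have c := ball_one_cases hy
  have c' := ball_one_cases hy'
  have hodd : oddSlots x = oddSlots x' := by
    by_contra hc
    have h3 := hB _ hxB _ hxB' hc
    have ht := hammingDist_triangle_right (oddSlots x) (oddSlots x') (oddSlots y)
    have h1 := hammingDist_oddSlots_le c
    have h2 := hammingDist_oddSlots_le c'
    rw [hammingDist_comm] at h1 h2
    change 3 ≤ hammingDist (oddSlots x) (oddSlots x') at h3
    omega
  have hodd' : ∀ (j : ℕ) (hj : 2 * j + 1 < n), x ⟨2 * j + 1, hj⟩ = x' ⟨2 * j + 1, hj⟩ :=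
    fun j hj => congrFun hodd ⟨j, by omega⟩
  -- a transposition flips an odd slot, so it cannot relate two strings agreeing on odd slots
  rcases c with rfl | ⟨j, m, hj, hm, hjm, hf⟩
  · rcases c' with h | ⟨j, m, hj, hm, hjm, hf⟩
    · exact hxx h
    · exact (hf ⟨2 * j + 1, hj⟩).mpr (Or.inl rfl) (hodd' j hj)
  rcases c' with rfl | ⟨j', m', hj', hm', hjm', hf'⟩
  · exact (hf ⟨2 * j + 1, hj⟩).mpr (Or.inl rfl) (hodd' j hj).symm
  obtain rfl : j = j' := by
    have h1 := (hf ⟨2 * j + 1, hj⟩).mpr (Or.inl rfl)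
    rw [hodd' j hj, hf'] at h1
    dsimp only at h1
    omega
  -- over a binary alphabet, flipping twice restores the symbol
  have hdiff : ∀ i : Fin n, x i ≠ x' i ↔ ¬ ((i : ℕ) = m ↔ (i : ℕ) = m') := by
    intro i
    have h1 := hf i
    have h2 := hf' i
    by_cases hi : (i : ℕ) = 2 * j + 1
    · obtain rfl : i = ⟨2 * j + 1, hj⟩ := Fin.ext hi
      have := hodd' j hj
      simp only [this, ne_eq, not_true_eq_false, false_iff, not_not]
      omega
    · simp only [hi, false_or] at h1 h2
      rw [← h1, ← h2]
      generalize x i = a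
      generalize x' i = b
      generalize y i = c
      revert a b c
      decide
  have hmm : m ≠ m' := by
    rintro rfl
    apply hxx
    funext i
    by_contra hc
    exact (hdiff i).mp hc Iff.rfl
  have hj2 : 2 * j + 2 < n := by omega
  have hdiff' : ∀ i : Fin n, x i ≠ x' i ↔ ((i : ℕ) = 2 * j ∨ (i : ℕ) = 2 * j + 2) := by
    intro i
    rw [hdiff]
    omega
  have hmod := (hxs.trans hxs'.symm).dvd
  rw [← Finset.sum_sub_distrib] at hmod
  -- only the blocks `j` and `j + 1` contribute to the difference of the two checksums
  rw [Fintype.sum_eq_add (⟨j, by omega⟩ : Fin (n / 2)) ⟨j + 1, by omega⟩ (by simp)] at hmod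
  · have ha := (hdiff' ⟨2 * j, by omega⟩).mpr (Or.inl rfl)
    have hb := (hdiff' ⟨2 * (j + 1), by omega⟩).mpr (Or.inr rfl)
    rw [ne_eq, Fin.ext_iff] at ha hb
    dsimp only at hmod
    rw [hodd' j hj, hodd' (j + 1) (by omega)] at hmod
    have a1 := (x ⟨2 * j, by omega⟩).isLt
    have a2 := (x' ⟨2 * j, by omega⟩).isLt
    have b1 := (x ⟨2 * (j + 1), by omega⟩).isLt
    have b2 := (x' ⟨2 * (j + 1), by omega⟩).isLt
    generalize ((x ⟨2 * j, _⟩ : Fin 2) : ℕ) = p at *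
    generalize ((x' ⟨2 * j, _⟩ : Fin 2) : ℕ) = p' at *
    generalize ((x ⟨2 * (j + 1), _⟩ : Fin 2) : ℕ) = q at *
    generalize ((x' ⟨2 * (j + 1), _⟩ : Fin 2) : ℕ) = q' at *
    rw [← mul_sub, ← mul_sub, sub_sub_sub_cancel_left, sub_sub_sub_cancel_left] at hmod
    push_cast at hmod
    have hp : (p : ℤ) - p' = 1 ∨ (p : ℤ) - p' = -1 := by omega
    have hq : (q : ℤ) - q' = 1 ∨ (q : ℤ) - q' = -1 := by omega
    rcases hp with hp | hp <;> rcases hq with hq | hq <;> rw [hp, hq] at hmod <;> omega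
  · rintro i ⟨h1, h2⟩
    have h1' : (i : ℕ) ≠ j := fun h => h1 (Fin.ext h)
    have h2' : (i : ℕ) ≠ j + 1 := fun h => h2 (Fin.ext h)
    have he : x ⟨2 * i, by omega⟩ = x' ⟨2 * i, by omega⟩ := by
      by_contra hc
      have := (hdiff' _).mp hc
      dsimp only at this
      omega
    rw [he, hodd' i (by omega), sub_self]
end

section
/- For every fixed q ≥ 2 and ρ ∈ [0,1], the limit lim_{n→∞} (1/n) log_q |{ x ∈ Z_q^n : run(x) ≤ ρn }| exists and equals H_q(ρ) if 0 ≤ ρ < 1 − 1/q, and equals 1 if 1 − 1/q ≤ ρ ≤ 1. -/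
open Filter Topology

/-! ### Counting strings by their number of changes -/

/-- The number of positions at which a string of length `m + 1` changes symbol. -/
def changes {m q : ℕ} (x : Fin (m + 1) → Fin q) : ℕ :=
  (Finset.univ.filter (fun i : Fin m => x i.castSucc ≠ x i.succ)).card

lemma runCount_eq_changes {m q : ℕ} (x : Fin (m + 1) → Fin q) :
    runCount x = 1 + changes x := by
  rfl

lemma changes_cons {m q : ℕ} (a : Fin q) (x : Fin (m + 1) → Fin q) :
    changes (Fin.cons a x : Fin (m + 2) → Fin q) = (if a ≠ x 0 then 1 else 0) + changes x := by
  unfold changes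
  rw [Finset.card_filter, Finset.card_filter, Fin.sum_univ_succ]
  rfl

/-- One step of a string: the symbol `b` is repeated in one way and changed in `q - 1` ways. -/
lemma sum_step {R : Type*} [CommSemiring R] {q : ℕ} (b : Fin q) (z : R) :
    ∑ a : Fin q, z ^ (if a ≠ b then 1 else 0) = 1 + ((q - 1 : ℕ) : R) * z := by
  rw [← Finset.add_sum_erase _ _ (Finset.mem_univ b)]
  rw [Finset.sum_congr rfl (g := fun _ => z)]
  · simp
  · intro a ha
    simp [Finset.ne_of_mem_erase ha]

/-- The generating function of the number of changes. -/
lemma sum_pow_changes {R : Type*} [CommSemiring R] (q m : ℕ) (z : R) :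
    ∑ x : Fin (m + 1) → Fin q, z ^ changes x = q * (1 + ((q - 1 : ℕ) : R) * z) ^ m := by
  induction m with
  | zero => simp [changes]
  | succ m ih =>
    rw [← (Fin.consEquiv (fun _ : Fin (m + 2) => Fin q)).sum_comp, Fintype.sum_prod_type_right]
    have hcons : ∀ (a : Fin q) (x : Fin (m + 1) → Fin q),
        changes ((Fin.consEquiv (fun _ : Fin (m + 2) => Fin q)) (a, x))
          = (if a ≠ x 0 then 1 else 0) + changes x := changes_cons
    simp_rw [hcons, pow_add, ← Finset.sum_mul, sum_step]
    rw [← Finset.mul_sum, ih]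
    ring

lemma card_changes_eq (q m k : ℕ) :
    (Finset.univ.filter (fun x : Fin (m + 1) → Fin q => changes x = k)).card
      = q * (m.choose k * (q - 1) ^ k) := by
  have h := congrArg (fun p => Polynomial.coeff p k)
    (sum_pow_changes q m (Polynomial.X : Polynomial ℕ))
  simp only [Polynomial.finsetSum_coeff, Polynomial.coeff_X_pow] at h
  rw [Finset.card_filter]
  simp only [eq_comm (a := k)] at h
  rw [h, ← Polynomial.C_eq_natCast, ← Polynomial.C_eq_natCast, Polynomial.coeff_C_mul]
  have h2 : (1 + Polynomial.C ((q - 1 : ℕ) : ℕ) * Polynomial.X : Polynomial ℕ) ^ m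
      = ((1 + Polynomial.X) ^ m).comp (Polynomial.C ((q - 1 : ℕ) : ℕ) * Polynomial.X) := by
    simp
  simp only [Nat.cast_id] at h2 ⊢
  rw [h2, Polynomial.comp_C_mul_X_coeff, Polynomial.coeff_one_add_X_pow]
  simp

/-- The number of strings of length `m + 1` with at most `ρ (m + 1)` runs. -/
noncomputable def count (q : ℕ) (ρ : ℝ) (m : ℕ) : ℕ :=
  (Finset.univ.filter
    (fun x : Fin (m + 1) → Fin q => (runCount x : ℝ) ≤ ρ * ((m + 1 : ℕ) : ℝ))).card

lemma natCard_eq_count (q : ℕ) (ρ : ℝ) (m : ℕ) :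
    Nat.card {x : Fin (m + 1) → Fin q // (runCount x : ℝ) ≤ ρ * ((m + 1 : ℕ) : ℝ)}
      = count q ρ m := by
  rw [Nat.card_eq_fintype_card, Fintype.card_subtype]
  rfl

/-! ### Lower bound -/

/-- The weights of the binomial distribution with parameters `m` and `K / m`, multiplied by
`m ^ m`, are largest at `K`. -/
lemma binomial_mode (m K k : ℕ) (hK : K ≤ m) (hk : k ≤ m) :
    m.choose k * K ^ k * (m - K) ^ (m - k) ≤ m.choose K * K ^ K * (m - K) ^ (m - K) := by
  set a : ℕ → ℕ := fun k => m.choose k * K ^ k * (m - K) ^ (m - k) with ha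
  -- Consecutive weights satisfy `(j + 1) (m - K) a (j + 1) = K (m - j) a j`.
  have step : ∀ j, j < m → a (j + 1) * ((j + 1) * (m - K)) = a j * ((m - j) * K) := by
    intro j hj
    have h1 := Nat.choose_succ_right_eq m j
    have h2 : m - j = (m - (j + 1)) + 1 := by omega
    simp only [ha]
    calc m.choose (j + 1) * K ^ (j + 1) * (m - K) ^ (m - (j + 1)) * ((j + 1) * (m - K))
        = (m.choose (j + 1) * (j + 1)) * K ^ (j + 1) * (m - K) ^ (m - (j + 1) + 1) := by ring
      _ = m.choose j * K ^ j * (m - K) ^ (m - j) * ((m - j) * K) := by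
        rw [h1, ← h2]; ring
  change a k ≤ a K
  rcases le_total k K with hkK | hkK
  · have up : ∀ d, d ≤ K → a (K - d) ≤ a K := by
      intro d
      induction d with
      | zero => intro _; simp
      | succ d ih =>
        intro hd
        refine le_trans ?_ (ih (by omega))
        obtain ⟨j, hj⟩ : ∃ j, j = K - (d + 1) := ⟨_, rfl⟩
        have e : K - d = j + 1 := by omega
        rw [← hj, e]
        have s := step j (by omega)
        have h3 : (j + 1) * (m - K) ≤ (m - j) * K := by
          rw [mul_comm]; exact Nat.mul_le_mul (by omega) (by omega)
        have h4 : 0 < (m - j) * K := Nat.mul_pos (by omega) (by omega)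
        refine Nat.le_of_mul_le_mul_right ?_ h4
        rw [← s]
        exact Nat.mul_le_mul_left _ h3
    have := up (K - k) (by omega)
    rwa [Nat.sub_sub_self hkK] at this
  · induction k, hkK using Nat.le_induction with
    | base => exact le_rfl
    | succ j hj ih =>
      refine le_trans ?_ (ih (by omega))
      have s := step j (by omega)
      have h3 : (m - j) * K ≤ (j + 1) * (m - K) := by
        rw [mul_comm]; exact Nat.mul_le_mul (by omega) (by omega)
      have h4 : 0 < (j + 1) * (m - K) := Nat.mul_pos (by omega) (by omega)
      refine Nat.le_of_mul_le_mul_right ?_ h4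
      rw [s]
      exact Nat.mul_le_mul_left _ h3

lemma pow_le_choose (m K : ℕ) (hK : K ≤ m) :
    m ^ m ≤ (m + 1) * (m.choose K * K ^ K * (m - K) ^ (m - K)) := by
  calc m ^ m = (K + (m - K)) ^ m := by rw [Nat.add_sub_cancel' hK]
    _ = ∑ k ∈ Finset.range (m + 1), K ^ k * (m - K) ^ (m - k) * m.choose k := by
      rw [add_pow]; simp
    _ ≤ ∑ k ∈ Finset.range (m + 1), m.choose K * K ^ K * (m - K) ^ (m - K) := by
      refine Finset.sum_le_sum fun k hk => ?_
      have := binomial_mode m K k hK (by simpa [Nat.lt_succ_iff] using hk)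
      calc _ = m.choose k * K ^ k * (m - K) ^ (m - k) := by ring
        _ ≤ _ := this
    _ = _ := by simp

lemma binEntropy_le_log_choose (m K : ℕ) (hm : 0 < m) (hK : K ≤ m) :
    m * Real.binEntropy (K / m) - Real.log (m + 1) ≤ Real.log (m.choose K) := by
  have h := pow_le_choose m K hK
  have hR : (m : ℝ) ^ m ≤ (m + 1) * (m.choose K * (K : ℝ) ^ K * ((m - K : ℕ) : ℝ) ^ (m - K)) := by
    exact_mod_cast h
  have hm' : (0 : ℝ) < m := by exact_mod_cast hm
  have hc : (m.choose K : ℝ) ≠ 0 := by exact_mod_cast (Nat.choose_pos hK).ne'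
  have pp : ∀ a : ℕ, (a : ℝ) ^ a ≠ 0 := by
    intro a
    rcases Nat.eq_zero_or_pos a with rfl | ha
    · simp
    · positivity
  have hl := Real.log_le_log (by positivity) hR
  have h1 : (m : ℝ) + 1 ≠ 0 := by positivity
  rw [Real.log_mul h1 (mul_ne_zero (mul_ne_zero hc (pp _)) (pp _)),
    Real.log_mul (mul_ne_zero hc (pp _)) (pp _), Real.log_mul hc (pp _),
    Real.log_pow, Real.log_pow, Real.log_pow] at hl
  have hsub : ((m - K : ℕ) : ℝ) = m - K := by push_cast [hK]; ring
  -- The factor `a` makes this hold at `a = 0` too.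
  have hlog : ∀ a : ℝ, a * Real.log (a / m) = a * Real.log a - a * Real.log m := by
    intro a
    rcases eq_or_ne a 0 with rfl | ha
    · simp
    · rw [Real.log_div ha hm'.ne']; ring
  have hent : m * Real.binEntropy (K / m)
      = m * Real.log m - K * Real.log K - ((m - K : ℕ) : ℝ) * Real.log ((m - K : ℕ) : ℝ) := by
    have e1 : (1 : ℝ) - K / m = ((m - K : ℕ) : ℝ) / m := by rw [hsub]; field_simp
    rw [Real.binEntropy, e1, Real.log_inv, Real.log_inv]
    have a1 := hlog K
    have a2 := hlog ((m - K : ℕ) : ℝ)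
    calc (m : ℝ) * (K / m * -Real.log (K / m)
          + ((m - K : ℕ) : ℝ) / m * -Real.log (((m - K : ℕ) : ℝ) / m))
        = -(K * Real.log (K / m))
          - ((m - K : ℕ) : ℝ) * Real.log (((m - K : ℕ) : ℝ) / m) := by field_simp; ring
      _ = _ := by rw [a1, a2, hsub]; ring
  linarith

lemma choose_le_count (q : ℕ) (ρ : ℝ) (m K : ℕ) (hK : (K : ℝ) + 1 ≤ ρ * (m + 1)) :
    q * (m.choose K * (q - 1) ^ K) ≤ count q ρ m := by
  rw [← card_changes_eq]
  refine Finset.card_le_card fun x hx => ?_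
  simp only [Finset.mem_filter, Finset.mem_univ, true_and] at hx ⊢
  rw [runCount_eq_changes, hx]
  push_cast
  linarith

lemma count_pos (q : ℕ) (hq : 2 ≤ q) (ρ : ℝ) (m : ℕ) (h : 1 ≤ ρ * (m + 1)) :
    0 < count q ρ m := by
  refine lt_of_lt_of_le ?_ (choose_le_count q ρ m 0 (by simpa using h))
  simp; omega

lemma le_log_count (q : ℕ) (hq : 2 ≤ q) (ρ : ℝ) (m K : ℕ) (hm : 0 < m) (hKm : K ≤ m)
    (hK : (K : ℝ) + 1 ≤ ρ * (m + 1)) :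
    m * Real.qaryEntropy q (K / m) - Real.log (m + 1) ≤ Real.log (count q ρ m) := by
  have h1 := binEntropy_le_log_choose m K hm hKm
  have h2 : ((m.choose K * (q - 1) ^ K : ℕ) : ℝ) ≤ count q ρ m := by
    exact_mod_cast le_trans (Nat.le_mul_of_pos_left _ (by omega)) (choose_le_count q ρ m K hK)
  have hc : 0 < (m.choose K : ℝ) := by exact_mod_cast Nat.choose_pos hKm
  have hq1 : 0 < ((q - 1 : ℕ) : ℝ) := by exact_mod_cast (by omega : 0 < q - 1)
  push_cast at h2
  have h3 := Real.log_le_log (by positivity) h2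
  rw [Real.log_mul hc.ne' (by positivity), Real.log_pow] at h3
  have hcast : (((q : ℤ) - 1 : ℤ) : ℝ) = ((q - 1 : ℕ) : ℝ) := by
    push_cast [Nat.cast_sub (by omega : 1 ≤ q)]; ring
  have hm' : (0 : ℝ) < m := by exact_mod_cast hm
  rw [Real.qaryEntropy, hcast, mul_add]
  have : (m : ℝ) * (K / m * Real.log ((q - 1 : ℕ) : ℝ)) = K * Real.log ((q - 1 : ℕ) : ℝ) := by
    field_simp
  linarith

/-! ### Upper bound -/

lemma qaryEntropy_eq (q : ℕ) (ρ : ℝ) : Real.qaryEntropy q ρ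
    = -(ρ * Real.log ρ) - (1 - ρ) * Real.log (1 - ρ) + ρ * Real.log ((q : ℝ) - 1) := by
  rw [Real.qaryEntropy, Real.binEntropy, Real.log_inv, Real.log_inv]
  push_cast
  ring

lemma qaryEntropy_max (q : ℕ) (hq : 2 ≤ q) :
    Real.qaryEntropy q (1 - 1 / (q : ℝ)) = Real.log q := by
  have h0 : (0 : ℝ) < q := by positivity
  have h1 : (0 : ℝ) < (q : ℝ) - 1 := by
    have : (2 : ℝ) ≤ q := by exact_mod_cast hq
    linarith
  have e : 1 - 1 / (q : ℝ) = (q - 1) / q := by field_simp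
  rw [qaryEntropy_eq, sub_sub_cancel, e, Real.log_div h1.ne' h0.ne', one_div, Real.log_inv]
  field_simp
  ring

lemma log_count_le (q : ℕ) (hq : 2 ≤ q) (ρ : ℝ) (h0 : 0 < ρ) (m : ℕ) (hc : 0 < count q ρ m) :
    Real.log (count q ρ m)
      ≤ m * Real.qaryEntropy q (min ρ (1 - 1 / (q : ℝ))) + Real.log q := by
  have hq2 : (2 : ℝ) ≤ q := by exact_mod_cast hq
  have hq0 : (0 : ℝ) < q := by linarith
  have hcR : (0 : ℝ) < count q ρ m := by exact_mod_cast hc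
  rcases lt_or_ge ρ (1 - 1 / (q : ℝ)) with h | h
  · rw [min_eq_left h.le, qaryEntropy_eq]
    have hρ1 : 0 < 1 - ρ := by
      have : 0 < 1 / (q : ℝ) := by positivity
      linarith
    have hq1 : 0 < (q : ℝ) - 1 := by linarith
    set z : ℝ := ρ / ((1 - ρ) * (q - 1)) with hz
    have hz0 : 0 < z := by positivity
    have hz1 : z ≤ 1 := by
      rw [hz, div_le_one (by positivity)]
      have : ρ * q ≤ (1 - 1 / (q : ℝ)) * q := mul_le_mul_of_nonneg_right h.le hq0.le
      have e : (1 - 1 / (q : ℝ)) * q = q - 1 := by field_simp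
      nlinarith
    have hgen := sum_pow_changes q m z
    have hcast : ((q - 1 : ℕ) : ℝ) = q - 1 := by
      push_cast [Nat.cast_sub (by omega : 1 ≤ q)]; ring
    have hbase : 1 + ((q - 1 : ℕ) : ℝ) * z = (1 - ρ)⁻¹ := by
      rw [hcast, hz]; field_simp; ring
    rw [hbase] at hgen
    have hle : (count q ρ m : ℝ) * z ^ (ρ * m) ≤ q * ((1 - ρ)⁻¹) ^ m := by
      rw [← hgen, count, ← nsmul_eq_mul, ← Finset.sum_const]
      refine le_trans (Finset.sum_le_sum fun x hx => ?_)
        (Finset.sum_le_sum_of_subset_of_nonneg (Finset.filter_subset _ _)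
          (fun x _ _ => by positivity))
      simp only [Finset.mem_filter, Finset.mem_univ, true_and] at hx
      rw [runCount_eq_changes] at hx
      push_cast at hx
      rw [← Real.rpow_natCast]
      exact Real.rpow_le_rpow_of_exponent_ge hz0 hz1 (by linarith)
    have hl := Real.log_le_log (by positivity) hle
    rw [Real.log_mul hcR.ne' (by positivity), Real.log_mul hq0.ne' (by positivity),
      Real.log_rpow hz0, Real.log_pow, Real.log_inv, hz, Real.log_div h0.ne' (by positivity),
      Real.log_mul hρ1.ne' hq1.ne'] at hl
    linarith
  · rw [min_eq_right h, qaryEntropy_max q hq]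
    have : (count q ρ m : ℝ) ≤ (q : ℝ) ^ (m + 1) := by
      have := Finset.card_filter_le (Finset.univ : Finset (Fin (m + 1) → Fin q))
        (fun x => (runCount x : ℝ) ≤ ρ * ((m + 1 : ℕ) : ℝ))
      rw [Finset.card_univ, Fintype.card_fun, Fintype.card_fin, Fintype.card_fin] at this
      exact_mod_cast this
    have hl := Real.log_le_log hcR this
    rw [Real.log_pow] at hl
    push_cast at hl
    linarith

/-! ### The limit -/

lemma tendsto_log_count (q : ℕ) (hq : 2 ≤ q) (ρ : ℝ) (h0 : 0 < ρ) :
    Tendsto (fun m : ℕ => Real.log (count q ρ m) / ((m : ℝ) + 1)) atTop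
      (𝓝 (Real.qaryEntropy q (min ρ (1 - 1 / (q : ℝ))))) := by
  have hq2 : (2 : ℝ) ≤ q := by exact_mod_cast hq
  have hqi : 1 / (q : ℝ) ≤ 1 / 2 := one_div_le_one_div_of_le (by norm_num) hq2
  have hqi0 : 0 < 1 / (q : ℝ) := by positivity
  set r := min ρ (1 - 1 / (q : ℝ)) with hr
  have hr0 : 0 < r := lt_min h0 (by linarith)
  have hr1 : r ≤ 1 := (min_le_right _ _).trans (by linarith)
  have hrρ : r ≤ ρ := min_le_left _ _
  have hcast : Tendsto (fun m : ℕ => (m : ℝ) + 1) atTop atTop :=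
    tendsto_atTop_add_const_right _ _ tendsto_natCast_atTop_atTop
  have hratio : Tendsto (fun m : ℕ => (m : ℝ) / ((m : ℝ) + 1)) atTop (𝓝 1) :=
    tendsto_natCast_div_add_atTop 1
  have hinv : Tendsto (fun m : ℕ => 1 / (m : ℝ)) atTop (𝓝 0) :=
    tendsto_one_div_atTop_nhds_zero_nat
  have hlog : Tendsto (fun m : ℕ => Real.log ((m : ℝ) + 1) / ((m : ℝ) + 1)) atTop (𝓝 0) :=
    (Real.isLittleO_log_id_atTop.tendsto_div_nhds_zero).comp hcast
  have hev : ∀ᶠ m : ℕ in atTop, 1 ≤ r * ((m : ℝ) + 1) :=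
    (hcast.const_mul_atTop hr0).eventually_ge_atTop 1
  set K : ℕ → ℕ := fun m => ⌊r * ((m : ℝ) + 1)⌋₊ - 1 with hKdef
  have hKcast : ∀ m : ℕ, 1 ≤ r * ((m : ℝ) + 1) →
      (K m : ℝ) + 1 = (⌊r * ((m : ℝ) + 1)⌋₊ : ℝ) := by
    intro m hm
    have : 1 ≤ ⌊r * ((m : ℝ) + 1)⌋₊ := Nat.one_le_floor_iff _ |>.2 hm
    have e : K m + 1 = ⌊r * ((m : ℝ) + 1)⌋₊ := Nat.sub_add_cancel this
    exact_mod_cast e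
  have hKup : ∀ m : ℕ, 1 ≤ r * ((m : ℝ) + 1) → (K m : ℝ) + 1 ≤ r * ((m : ℝ) + 1) := by
    intro m hm
    rw [hKcast m hm]
    exact Nat.floor_le (by linarith)
  have hKlim : Tendsto (fun m : ℕ => (K m : ℝ) / m) atTop (𝓝 r) := by
    have l1 : Tendsto (fun m : ℕ => r - 2 * (1 / (m : ℝ))) atTop (𝓝 r) := by
      simpa using tendsto_const_nhds.sub (hinv.const_mul 2)
    refine tendsto_of_tendsto_of_tendsto_of_le_of_le' l1 tendsto_const_nhds ?_ ?_
    · filter_upwards [hev, eventually_gt_atTop 0] with m hm hm0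
      have hm' : (0 : ℝ) < m := by exact_mod_cast hm0
      have h1 := hKcast m hm
      have h2 := Nat.lt_floor_add_one (r * ((m : ℝ) + 1))
      rw [le_div_iff₀ hm']
      have : (r - 2 * (1 / (m : ℝ))) * m = r * m - 2 := by field_simp
      rw [this]
      nlinarith
    · filter_upwards [hev, eventually_gt_atTop 0] with m hm hm0
      have hm' : (0 : ℝ) < m := by exact_mod_cast hm0
      have h1 := hKup m hm
      rw [div_le_iff₀ hm']
      nlinarith
  have hent := ((Real.qaryEntropy_continuous (q := q)).tendsto r).comp hKlim
  have hlow : Tendsto (fun m : ℕ => (m : ℝ) / ((m : ℝ) + 1) * Real.qaryEntropy q (K m / m)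
      - Real.log ((m : ℝ) + 1) / ((m : ℝ) + 1)) atTop (𝓝 (Real.qaryEntropy q r)) := by
    simpa using (hratio.mul hent).sub hlog
  have hupp : Tendsto (fun m : ℕ => (m : ℝ) / ((m : ℝ) + 1) * Real.qaryEntropy q r
      + Real.log q / ((m : ℝ) + 1)) atTop (𝓝 (Real.qaryEntropy q r)) := by
    simpa using (hratio.mul_const (Real.qaryEntropy q r)).add (hcast.const_div_atTop (Real.log q))
  refine tendsto_of_tendsto_of_tendsto_of_le_of_le' hlow hupp ?_ ?_
  · filter_upwards [hev, eventually_gt_atTop 0] with m hm hm0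
    have hp : (0 : ℝ) < (m : ℝ) + 1 := by positivity
    have hle := hKup m hm
    have hKm : K m ≤ m := by
      have : (K m : ℝ) ≤ m := by nlinarith
      exact_mod_cast this
    have := le_log_count q hq ρ m (K m) hm0 hKm
      (hle.trans (mul_le_mul_of_nonneg_right hrρ hp.le))
    rw [div_mul_eq_mul_div, ← sub_div]
    exact div_le_div_of_nonneg_right this hp.le
  · filter_upwards [hev] with m hm
    have hp : (0 : ℝ) < (m : ℝ) + 1 := by positivity
    have := log_count_le q hq ρ h0 m
      (count_pos q hq ρ m (hm.trans (mul_le_mul_of_nonneg_right hrρ hp.le)))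
    rw [div_mul_eq_mul_div, ← add_div]
    exact div_le_div_of_nonneg_right this hp.le

theorem stmt6 (q : ℕ) (hq : 2 ≤ q) (ρ : ℝ) (h0 : 0 ≤ ρ) (h1 : ρ ≤ 1) :
    Filter.Tendsto
      (fun n : ℕ =>
        Real.logb q (Nat.card {x : Fin n → Fin q // (runCount x : ℝ) ≤ ρ * n}) / n)
      Filter.atTop
      (nhds (if ρ < 1 - 1 / (q : ℝ) then
          -(ρ * Real.logb q ρ) - (1 - ρ) * Real.logb q (1 - ρ) + ρ * Real.logb q ((q : ℝ) - 1)
        else 1)) := by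
  have hq2 : (2 : ℝ) ≤ q := by exact_mod_cast hq
  have hlq : 0 < Real.log q := Real.log_pos (by linarith)
  rw [← tendsto_add_atTop_iff_nat 1]
  simp only [natCard_eq_count]
  rcases h0.eq_or_lt with rfl | hpos
  · have hqi : 1 / (q : ℝ) < 1 := by rw [div_lt_one] <;> linarith
    rw [if_pos (by linarith)]
    -- No nonempty string has zero runs, and `logb q 0 = 0`.
    have hz : ∀ m, count q 0 m = 0 := by
      intro m
      rw [count, Finset.card_eq_zero, Finset.filter_eq_empty_iff]
      intro x _
      rw [runCount_eq_changes]
      push_cast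
      have : (0 : ℝ) ≤ changes x := by positivity
      linarith
    simp [hz]
  · have h := (tendsto_log_count q hq ρ hpos).div_const (Real.log q)
    convert h using 2 with m
    · simp only [Real.logb]
      push_cast
      rw [div_right_comm]
    · split_ifs with hlt
      · rw [min_eq_left hlt.le, qaryEntropy_eq]
        simp only [Real.logb]
        field_simp
      · rw [min_eq_right (not_lt.1 hlt), qaryEntropy_max q hq, div_self hlq.ne']
end

section
/- For every q ≥ 2, every n ≥ 1, and every x ∈ Z_q^n, the cardinality of B(x;1) equals run(x), the number of runs in x. -/
/-- The string obtained from `x` by the transposition at (0-indexed) location `k`. -/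
def transposeAt {m q : ℕ} (x : Fin (m + 1) → Fin q) (k : Fin m) : Fin (m + 1) → Fin q :=
  fun i => x (Equiv.swap k.castSucc k.succ i)

lemma transposeAt_castSucc {m q : ℕ} (x : Fin (m + 1) → Fin q) (k : Fin m) :
    transposeAt x k k.castSucc = x k.succ := by
  simp [transposeAt]

lemma transposeAt_succ {m q : ℕ} (x : Fin (m + 1) → Fin q) (k : Fin m) :
    transposeAt x k k.succ = x k.castSucc := by
  simp [transposeAt]

lemma transposeAt_of_ne {m q : ℕ} (x : Fin (m + 1) → Fin q) (k : Fin m) {i : Fin (m + 1)}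
    (h₁ : i ≠ k.castSucc) (h₂ : i ≠ k.succ) : transposeAt x k i = x i := by
  simp [transposeAt, Equiv.swap_apply_of_ne_of_ne h₁ h₂]

lemma transposeAt_eq_self {m q : ℕ} (x : Fin (m + 1) → Fin q) (k : Fin m)
    (h : x k.castSucc = x k.succ) : transposeAt x k = x := by
  funext i
  by_cases h₁ : i = k.castSucc
  · rw [h₁, transposeAt_castSucc, h]
  by_cases h₂ : i = k.succ
  · rw [h₂, transposeAt_succ, h]
  exact transposeAt_of_ne x k h₁ h₂

/-- The two strings differ at position `k`, which the transposition at `l > k` leaves alone: a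
transposition across a run boundary is determined by the first position it changes. -/
lemma transposeAt_ne_of_lt {m q : ℕ} (x : Fin (m + 1) → Fin q) {k l : Fin m}
    (hk : x k.castSucc ≠ x k.succ) (hkl : k < l) : transposeAt x k ≠ transposeAt x l := by
  intro h
  have h' := congrFun h k.castSucc
  rw [transposeAt_castSucc, transposeAt_of_ne] at h'
  · exact hk h'.symm
  · exact fun e => hkl.ne (Fin.castSucc_injective _ e)
  · intro e
    have := congrArg Fin.val e
    simp at this
    omega

lemma applyLocs_empty_iff {n q : ℕ} (x y : Fin n → Fin q) : ApplyLocs ∅ x y ↔ y = x := by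
  simp [ApplyLocs, funext_iff]

lemma applyLocs_singleton_iff {m q : ℕ} (x y : Fin (m + 1) → Fin q) (k : Fin m) :
    ApplyLocs {(k : ℕ)} x y ↔ y = transposeAt x k := by
  rw [funext_iff]
  refine forall_congr' fun i => ?_
  suffices h : (if h : (i : ℕ) ∈ ({(k : ℕ)} : Finset ℕ) ∧ (i : ℕ) + 1 < m + 1 then
      x ⟨(i : ℕ) + 1, h.2⟩
    else if (i : ℕ) ≠ 0 ∧ (i : ℕ) - 1 ∈ ({(k : ℕ)} : Finset ℕ) then
      x ⟨(i : ℕ) - 1, lt_of_le_of_lt (Nat.sub_le _ _) i.isLt⟩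
    else x i) = transposeAt x k i by rw [h]
  by_cases h₁ : i = k.castSucc
  · subst h₁
    rw [transposeAt_castSucc, dif_pos (by simp)]
    rfl
  have h₁' : (i : ℕ) ≠ k := fun e => h₁ (Fin.ext e)
  rw [dif_neg (by simp [h₁'])]
  by_cases h₂ : i = k.succ
  · subst h₂
    rw [transposeAt_succ, if_pos (by simp)]
    rfl
  have h₂' : (i : ℕ) ≠ k + 1 := fun e => h₂ (Fin.ext e)
  rw [transposeAt_of_ne x k h₁ h₂, if_neg (by simp only [Finset.mem_singleton]; omega)]

lemma ballB_one {m q : ℕ} (x : Fin (m + 1) → Fin q) :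
    BallB 1 x = ↑(insert x ((Finset.univ.filter
      (fun k : Fin m => x k.castSucc ≠ x k.succ)).image (transposeAt x))) := by
  ext y
  simp only [Finset.coe_insert, Finset.coe_image, Set.mem_insert_iff, Set.mem_image,
    Finset.mem_coe, Finset.mem_filter, Finset.mem_univ, true_and]
  constructor
  · rintro ⟨K, hK, hv, ha⟩
    rcases Finset.card_le_one_iff_subset_singleton.1 hK with ⟨k, hk⟩
    rcases Finset.subset_singleton_iff.1 hk with rfl | rfl
    · exact Or.inl ((applyLocs_empty_iff x y).1 ha)
    · have hkm : k < m := by simpa using hv.1 k (Finset.mem_singleton_self k)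
      have hy := (applyLocs_singleton_iff x y ⟨k, hkm⟩).1 ha
      by_cases hx : x (Fin.castSucc ⟨k, hkm⟩) = x (Fin.succ ⟨k, hkm⟩)
      · exact Or.inl (hy.trans (transposeAt_eq_self x _ hx))
      · exact Or.inr ⟨_, hx, hy.symm⟩
  · rintro (rfl | ⟨k, -, rfl⟩)
    · exact ⟨∅, by simp, by simp [ValidLocs], (applyLocs_empty_iff _ _).2 rfl⟩
    · exact ⟨{(k : ℕ)}, by simp, by simp [ValidLocs], (applyLocs_singleton_iff _ _ k).2 rfl⟩

theorem stmt7 (q n : ℕ) (hq : 2 ≤ q) (hn : 1 ≤ n) (x : Fin n → Fin q) :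
    (BallB 1 x).ncard = runCount x := by
  obtain ⟨m, rfl⟩ : ∃ m, n = m + 1 := ⟨n - 1, by omega⟩
  rw [ballB_one, Set.ncard_coe_finset, Finset.card_insert_of_notMem, Finset.card_image_of_injOn]
  · rw [runCount, if_neg (Nat.succ_ne_zero m), add_comm]
    rfl
  · intro k hk l hl h
    simp only [Finset.coe_filter, Finset.mem_univ, true_and, Set.mem_setOf_eq] at hk hl
    rcases lt_trichotomy k l with hkl | hkl | hkl
    · exact absurd h (transposeAt_ne_of_lt x hk hkl)
    · exact hkl
    · exact absurd h.symm (transposeAt_ne_of_lt x hl hkl)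
  · simp only [Finset.mem_image, Finset.mem_filter, Finset.mem_univ, true_and, not_exists, not_and]
    intro k hk h
    have h' := congrFun h k.castSucc
    rw [transposeAt_castSucc] at h'
    exact hk h'.symm
end

section
/- For every q ≥ 2, n ≥ 1, t ≥ 1, and every x ∈ Z_q^n, |B(x;t)| ≤ Σ_{s=0}^{t} C(n−s, s), where C(·,·) denotes the binomial coefficient. -/
open Classical in
/-- The valid location sets of size `s` for strings of length `n`. -/
noncomputable def locFamily (n s : ℕ) : Finset (Finset ℕ) :=
  ((Finset.range n).powersetCard s).filter (ValidLocs n)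

lemma mem_locFamily {n s : ℕ} {K : Finset ℕ} :
    K ∈ locFamily n s ↔ ValidLocs n K ∧ K.card = s := by
  simp only [locFamily, Finset.mem_filter, Finset.mem_powersetCard]
  refine ⟨fun h => ⟨h.2, h.1.2⟩, fun h => ⟨⟨fun k hk => ?_, h.2⟩, h.1⟩⟩
  have := h.1.1 k hk
  simp only [Finset.mem_range]
  omega

/-- A valid set either avoids the last location `n`, or becomes valid for length `n` once `n` is
removed. -/
lemma locFamily_subset (n s : ℕ) :
    locFamily (n + 2) (s + 1) ⊆ locFamily (n + 1) (s + 1) ∪ (locFamily n s).image (insert n) := by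
  intro K hK
  obtain ⟨⟨hb, hd⟩, hc⟩ := mem_locFamily.1 hK
  rw [Finset.mem_union, Finset.mem_image]
  by_cases hn : n ∈ K
  · refine Or.inr ⟨K.erase n, mem_locFamily.2 ⟨⟨fun k hk => ?_, fun k hk l hl => ?_⟩, ?_⟩,
      Finset.insert_erase hn⟩
    · obtain ⟨h1, h2⟩ := Finset.mem_erase.1 hk
      have := hb k h2
      have := hd k h2 n hn h1
      omega
    · exact hd k (Finset.mem_of_mem_erase hk) l (Finset.mem_of_mem_erase hl)
    · rw [Finset.card_erase_of_mem hn, hc, Nat.add_sub_cancel]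
  · refine Or.inl (mem_locFamily.2 ⟨⟨fun k hk => ?_, hd⟩, hc⟩)
    have := hb k hk
    have : k ≠ n := fun h => hn (h ▸ hk)
    omega

lemma card_locFamily_zero (n : ℕ) : (locFamily n 0).card ≤ 1 := by
  refine Finset.card_le_one.2 fun a ha b hb => ?_
  rw [Finset.card_eq_zero.1 (mem_locFamily.1 ha).2, Finset.card_eq_zero.1 (mem_locFamily.1 hb).2]

lemma locFamily_eq_empty {n : ℕ} (hn : n < 2) (s : ℕ) : locFamily n (s + 1) = ∅ := by
  refine Finset.eq_empty_of_forall_notMem fun K hK => ?_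
  obtain ⟨⟨hb, -⟩, hc⟩ := mem_locFamily.1 hK
  obtain ⟨k, hk⟩ := Finset.card_pos.1 (by omega : 0 < K.card)
  have := hb k hk
  omega

lemma card_locFamily_le (n s : ℕ) : (locFamily n s).card ≤ Nat.choose (n - s) s := by
  induction n using Nat.strong_induction_on generalizing s with
  | _ n ih =>
    match n, s with
    | n, 0 => simpa using card_locFamily_zero n
    | 0, s + 1 => simp [locFamily_eq_empty]
    | 1, s + 1 => simp [locFamily_eq_empty]
    | n + 2, s + 1 =>
      have h1 := ih (n + 1) (by omega) (s + 1)
      have h2 := ih n (by omega) s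
      have h3 := (Finset.card_le_card (locFamily_subset n s)).trans (Finset.card_union_le _ _)
      have h4 : ((locFamily n s).image (insert n)).card ≤ _ := Finset.card_image_le
      have e1 : n + 1 - (s + 1) = n - s := by omega
      rw [e1] at h1
      rcases le_or_gt s n with h | h
      · have e2 : n + 2 - (s + 1) = (n - s) + 1 := by omega
        rw [e2, Nat.choose_succ_succ']
        omega
      · -- Truncated subtraction: both binomials of the recursion vanish when `n < s`.
        rw [Nat.choose_eq_zero_of_lt (by omega)] at h1 h2
        omega

theorem stmt8 (q n t : ℕ) (hq : 2 ≤ q) (hn : 1 ≤ n) (ht : 1 ≤ t)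
    (x : Fin n → Fin q) :
    (BallB t x).ncard ≤ ∑ s ∈ Finset.range (t + 1), Nat.choose (n - s) s := by
  classical
  let f : Finset ℕ → Fin n → Fin q := fun K i =>
    if h : (i : ℕ) ∈ K ∧ (i : ℕ) + 1 < n then x ⟨(i : ℕ) + 1, h.2⟩
    else if (i : ℕ) ≠ 0 ∧ (i : ℕ) - 1 ∈ K then
      x ⟨(i : ℕ) - 1, lt_of_le_of_lt (Nat.sub_le _ _) i.isLt⟩
    else x i
  let F := (Finset.range (t + 1)).biUnion (locFamily n)
  have hsub : BallB t x ⊆ (F.image f : Finset (Fin n → Fin q)) := by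
    rintro y ⟨K, hc, hv, hy⟩
    refine Finset.mem_coe.2 (Finset.mem_image.2 ⟨K, Finset.mem_biUnion.2
      ⟨K.card, Finset.mem_range.2 (by omega), mem_locFamily.2 ⟨hv, rfl⟩⟩, ?_⟩)
    exact funext fun i => (hy i).symm
  calc (BallB t x).ncard
      ≤ (F.image f).card := by
        rw [← Set.ncard_coe_finset]
        exact Set.ncard_le_ncard hsub (Finset.finite_toSet _)
    _ ≤ F.card := Finset.card_image_le
    _ ≤ ∑ s ∈ Finset.range (t + 1), (locFamily n s).card := Finset.card_biUnion_le
    _ ≤ _ := Finset.sum_le_sum fun s _ => card_locFamily_le n s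
end

section
/- For every q ≥ 2, n ≥ 1, t ≥ 1, and every x ∈ Z_q^n, |B(x;t)| ≥ Σ_{u=0}^{t} C(⌊run(x)/2⌋, u) · C(⌊run(x)/2⌋ − 2u − 1, t−u), where C(a,b) denotes the binomial coefficient (taken to be 0 when a < b or a < 0). -/
/-- `k` is the (0-indexed) last position of a run of `x` that is not the last run. -/
def IsBdry {n q : ℕ} (x : Fin n → Fin q) (k : ℕ) : Prop :=
  ∃ h : k + 1 < n, x ⟨k, by omega⟩ ≠ x ⟨k + 1, h⟩

/-- The string obtained from `x` by the transpositions at the locations in `K`. -/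
def applyFun {n q : ℕ} (K : Finset ℕ) (x : Fin n → Fin q) : Fin n → Fin q := fun i =>
  if h : (i : ℕ) ∈ K ∧ (i : ℕ) + 1 < n then x ⟨(i : ℕ) + 1, h.2⟩
  else if (i : ℕ) ≠ 0 ∧ (i : ℕ) - 1 ∈ K then
    x ⟨(i : ℕ) - 1, lt_of_le_of_lt (Nat.sub_le _ _) i.isLt⟩
  else x i

/-- If `k` is a boundary in `K` but not in `K'`, and `K`, `K'` agree below `k`, then the two
resulting strings differ at position `k`. -/
lemma applyFun_ne {n q : ℕ} (x : Fin n → Fin q) (K K' : Finset ℕ) (hK : ValidLocs n K)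
    (k : ℕ) (hk : k ∈ K) (hk' : k ∉ K') (hb : IsBdry x k)
    (hlt : ∀ l < k, l ∈ K' → l ∈ K) : applyFun K x ≠ applyFun K' x := by
  intro h
  obtain ⟨hn, hne⟩ := hb
  have h1 := congrFun h ⟨k, by omega⟩
  have h2 : ¬ (k ≠ 0 ∧ k - 1 ∈ K') := by
    rintro ⟨h0, hm⟩
    have := hK.2 k hk (k - 1) (hlt _ (by omega) hm) (by omega)
    omega
  have e1 : applyFun K x ⟨k, by omega⟩ = x ⟨k + 1, hn⟩ := by
    simp [applyFun, hk, hn]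
  have e2 : applyFun K' x ⟨k, by omega⟩ = x ⟨k, by omega⟩ := by
    simp only [applyFun]
    rw [dif_neg (fun hc => hk' hc.1), if_neg h2]
  exact hne (by rw [← e1, ← e2, h1])

lemma locs_unique {n q : ℕ} (x : Fin n → Fin q) (K K' : Finset ℕ) (hK : ValidLocs n K)
    (hK' : ValidLocs n K') (hb : ∀ k ∈ K, IsBdry x k) (hb' : ∀ k ∈ K', IsBdry x k)
    (h : applyFun K x = applyFun K' x) : K = K' := by
  have key : ∀ k, k ∈ K ↔ k ∈ K' := by
    intro k
    induction k using Nat.strong_induction_on with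
    | _ k ih =>
      constructor
      · intro hk
        by_contra hk'
        exact applyFun_ne x K K' hK k hk hk' (hb k hk) (fun l hl => (ih l hl).2) h
      · intro hk
        by_contra hk'
        exact applyFun_ne x K' K hK' k hk hk' (hb' k hk) (fun l hl => (ih l hl).1) h.symm
  exact Finset.ext key

/-- Increasing enumeration of the `runCount x - 1` boundaries. -/
lemma exists_enum {n q : ℕ} (hn : 1 ≤ n) (x : Fin n → Fin q) :
    ∃ b : ℕ → ℕ, (∀ i, i + 1 < runCount x → IsBdry x (b i)) ∧
      ∀ i j, i < j → j + 1 < runCount x → b i < b j := by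
  classical
  have hfin : (Set.ofPred (IsBdry x)).Finite :=
    (Set.finite_lt_nat n).subset (by rintro k ⟨h, -⟩; simp only [Set.mem_ofPred_eq]; omega)
  have hc : runCount x = 1 + hfin.toFinset.card := by
    unfold runCount
    rw [if_neg (by omega)]
    congr 1
    refine Finset.card_bij (fun i _ => (i : ℕ)) ?_ ?_ ?_
    · intro i hi
      have hlt := i.isLt
      simp only [Finset.mem_filter, Finset.mem_univ, true_and] at hi
      simp only [Set.Finite.mem_toFinset, Set.mem_ofPred_eq]
      exact ⟨by omega, hi⟩
    · intro i _ j _ h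
      exact Fin.ext h
    · intro k hk
      simp only [Set.Finite.mem_toFinset, Set.mem_ofPred_eq] at hk
      obtain ⟨h, hne⟩ := hk
      exact ⟨⟨k, by omega⟩, by simpa using hne, rfl⟩
  refine ⟨Nat.nth (IsBdry x), fun i hi => Nat.nth_mem_of_lt_card hfin (by omega), ?_⟩
  intro i j hij hj
  exact Nat.nth_lt_nth_of_lt_card hfin hij (by omega)

/-- The indices `j < m - 1` for which the boundary numbered `2 * j + 1` is next to none of the
boundaries numbered `2 * i`, `i ∈ U`. -/
def freeIdx (m : ℕ) (U : Finset ℕ) : Finset ℕ :=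
  (Finset.range (m - 1)).filter (fun j => j ∉ U ∧ j + 1 ∉ U)

lemma freeIdx_card (m : ℕ) (U : Finset ℕ) : m - 2 * U.card - 1 ≤ (freeIdx m U).card := by
  have hsub : Finset.range (m - 1) \ (U ∪ U.image (fun i => i - 1)) ⊆ freeIdx m U := by
    intro j hj
    simp only [Finset.mem_sdiff, Finset.mem_union, Finset.mem_image, not_or, not_exists] at hj
    simp only [freeIdx, Finset.mem_filter]
    exact ⟨hj.1, hj.2.1, fun h => hj.2.2 (j + 1) ⟨h, by omega⟩⟩
  have h1 := Finset.card_le_card hsub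
  have h2 := Finset.le_card_sdiff (U ∪ U.image (fun i => i - 1)) (Finset.range (m - 1))
  have h3 := Finset.card_union_le U (U.image (fun i => i - 1))
  have h4 : (U.image (fun i => i - 1)).card ≤ U.card := Finset.card_image_le
  rw [Finset.card_range] at h2
  omega

/-- The set of boundary numbers `2 * i` for `i ∈ U` and `2 * j + 1` for `j ∈ V`. -/
def evenOdd (U V : Finset ℕ) : Finset ℕ :=
  U.image (fun i => 2 * i) ∪ V.image (fun j => 2 * j + 1)

lemma two_mul_mem_evenOdd (U V : Finset ℕ) (i : ℕ) : 2 * i ∈ evenOdd U V ↔ i ∈ U := by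
  simp only [evenOdd, Finset.mem_union, Finset.mem_image]
  constructor
  · rintro (⟨a, ha, h⟩ | ⟨a, ha, h⟩)
    · obtain rfl : a = i := by omega
      exact ha
    · omega
  · exact fun h => Or.inl ⟨i, h, rfl⟩

lemma two_mul_add_one_mem_evenOdd (U V : Finset ℕ) (i : ℕ) :
    2 * i + 1 ∈ evenOdd U V ↔ i ∈ V := by
  simp only [evenOdd, Finset.mem_union, Finset.mem_image]
  constructor
  · rintro (⟨a, ha, h⟩ | ⟨a, ha, h⟩)
    · omega
    · obtain rfl : a = i := by omega
      exact ha
  · exact fun h => Or.inr ⟨i, h, rfl⟩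

lemma evenOdd_lt (m : ℕ) (U V : Finset ℕ) (hU : U ⊆ Finset.range m) (hV : V ⊆ freeIdx m U) :
    ∀ a ∈ evenOdd U V, a + 1 < 2 * m := by
  intro a ha
  rcases Nat.even_or_odd' a with ⟨c, rfl | rfl⟩
  · have := Finset.mem_range.1 (hU ((two_mul_mem_evenOdd U V c).1 ha))
    omega
  · have h := hV ((two_mul_add_one_mem_evenOdd U V c).1 ha)
    simp only [freeIdx, Finset.mem_filter, Finset.mem_range] at h
    omega

lemma evenOdd_sparse (m : ℕ) (U V : Finset ℕ) (hV : V ⊆ freeIdx m U) :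
    ∀ a ∈ evenOdd U V, a + 1 ∉ evenOdd U V := by
  intro a ha ha'
  rcases Nat.even_or_odd' a with ⟨c, rfl | rfl⟩
  · have h := hV ((two_mul_add_one_mem_evenOdd U V c).1 ha')
    simp only [freeIdx, Finset.mem_filter] at h
    exact h.2.1 ((two_mul_mem_evenOdd U V c).1 ha)
  · have h := hV ((two_mul_add_one_mem_evenOdd U V c).1 ha)
    simp only [freeIdx, Finset.mem_filter] at h
    exact h.2.2 ((two_mul_mem_evenOdd U V (c + 1)).1 ha')

theorem stmt9 (q n t : ℕ) (hq : 2 ≤ q) (hn : 1 ≤ n) (ht : 1 ≤ t)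
    (x : Fin n → Fin q) :
    ∑ u ∈ Finset.range (t + 1),
      Nat.choose (runCount x / 2) u *
        (if 2 * u + 1 ≤ runCount x / 2 then
          Nat.choose (runCount x / 2 - 2 * u - 1) (t - u) else 0)
      ≤ (BallB t x).ncard := by
  classical
  obtain ⟨b, hb, hmono⟩ := exists_enum hn x
  obtain ⟨m, hm⟩ : ∃ m, m = runCount x / 2 := ⟨_, rfl⟩
  rw [← hm]
  have hmr : 2 * m ≤ runCount x := by omega
  let S : Finset (Σ _ : ℕ, Σ _ : Finset ℕ, Finset ℕ) :=
    (Finset.range (t + 1)).sigma fun u =>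
      (Finset.powersetCard u (Finset.range m)).sigma fun U =>
        Finset.powersetCard (t - u) (freeIdx m U)
  have hS : ∀ s ∈ S, s.1 ≤ t ∧ s.2.1 ⊆ Finset.range m ∧ s.2.1.card = s.1 ∧
      s.2.2 ⊆ freeIdx m s.2.1 ∧ s.2.2.card = t - s.1 := by
    intro s hs
    simp only [S, Finset.mem_sigma, Finset.mem_range, Finset.mem_powersetCard] at hs
    exact ⟨by omega, hs.2.1.1, hs.2.1.2, hs.2.2.1, hs.2.2.2⟩
  have hcard : ∑ u ∈ Finset.range (t + 1), Nat.choose m u *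
      (if 2 * u + 1 ≤ m then Nat.choose (m - 2 * u - 1) (t - u) else 0) ≤ S.card := by
    simp only [S, Finset.card_sigma]
    refine Finset.sum_le_sum fun u _ => ?_
    have hconst : ∀ U ∈ Finset.powersetCard u (Finset.range m),
        (if 2 * u + 1 ≤ m then Nat.choose (m - 2 * u - 1) (t - u) else 0) ≤
          (Finset.powersetCard (t - u) (freeIdx m U)).card := by
      intro U hU
      rw [Finset.mem_powersetCard] at hU
      split_ifs
      · rw [Finset.card_powersetCard, ← hU.2]
        exact Nat.choose_le_choose _ (freeIdx_card m U)
      · exact Nat.zero_le _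
    have := Finset.card_nsmul_le_sum _ _ _ hconst
    simpa [Finset.card_powersetCard] using this
  refine hcard.trans ?_
  have hinj : ∀ i j, i + 1 < 2 * m → j + 1 < 2 * m → b i = b j → i = j := by
    intro i j hi hj h
    rcases lt_trichotomy i j with h1 | h1 | h1
    · have := hmono i j h1 (by omega)
      omega
    · exact h1
    · have := hmono j i h1 (by omega)
      omega
  have hlt : ∀ s ∈ S, ∀ a ∈ evenOdd s.2.1 s.2.2, a + 1 < 2 * m := fun s hs =>
    evenOdd_lt m _ _ (hS s hs).2.1 (hS s hs).2.2.2.1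
  let K : (Σ _ : ℕ, Σ _ : Finset ℕ, Finset ℕ) → Finset ℕ := fun s =>
    (evenOdd s.2.1 s.2.2).image b
  have hKb : ∀ s ∈ S, ∀ k ∈ K s, IsBdry x k := by
    intro s hs k hk
    obtain ⟨a, ha, rfl⟩ := Finset.mem_image.1 hk
    have := hlt s hs a ha
    exact hb a (by omega)
  -- Some index lies strictly between two non-consecutive ones, so `b` separates them by two.
  have hgap : ∀ s ∈ S, ∀ a ∈ evenOdd s.2.1 s.2.2, ∀ c ∈ evenOdd s.2.1 s.2.2, a < c →
      b a + 2 ≤ b c := by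
    intro s hs a ha c hc hac
    have hne : a + 1 ≠ c := fun h =>
      evenOdd_sparse m _ _ (hS s hs).2.2.2.1 a ha (h ▸ hc)
    have hc' := hlt s hs c hc
    have h1 := hmono a (a + 1) (by omega) (by omega)
    have h2 := hmono (a + 1) c (by omega) (by omega)
    omega
  have hKv : ∀ s ∈ S, ValidLocs n (K s) := by
    intro s hs
    refine ⟨fun k hk => (hKb s hs k hk).1, ?_⟩
    intro k hk l hl hkl
    obtain ⟨a, ha, rfl⟩ := Finset.mem_image.1 hk
    obtain ⟨c, hc, rfl⟩ := Finset.mem_image.1 hl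
    rcases lt_trichotomy a c with h | h | h
    · exact Or.inl (hgap s hs a ha c hc h)
    · exact absurd (congrArg b h) hkl
    · exact Or.inr (hgap s hs c hc a ha h)
  have hKc : ∀ s ∈ S, (K s).card ≤ t := by
    intro s hs
    have h1 : (K s).card ≤ (evenOdd s.2.1 s.2.2).card := Finset.card_image_le
    have h2 : (evenOdd s.2.1 s.2.2).card ≤ _ := Finset.card_union_le _ _
    have h3 : (s.2.1.image (fun i => 2 * i)).card ≤ _ := Finset.card_image_le
    have h4 : (s.2.2.image (fun j => 2 * j + 1)).card ≤ _ := Finset.card_image_le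
    have h5 := hS s hs
    omega
  rw [Set.ncard_eq_toFinset_card _ (Set.toFinite _)]
  refine Finset.card_le_card_of_injOn (fun s => applyFun (K s) x) ?_ ?_
  · intro s hs
    have hs' : s ∈ S := hs
    simp only [Set.Finite.coe_toFinset]
    exact ⟨K s, hKc s hs', hKv s hs', fun _ => rfl⟩
  · intro s hs s' hs' h
    replace hs : s ∈ S := hs
    replace hs' : s' ∈ S := hs'
    have hK : K s = K s' :=
      locs_unique x _ _ (hKv s hs) (hKv s' hs') (hKb s hs) (hKb s' hs') h
    have hE : ∀ a, a ∈ evenOdd s.2.1 s.2.2 ↔ a ∈ evenOdd s'.2.1 s'.2.2 := by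
      have aux : ∀ r ∈ S, ∀ r' ∈ S, K r = K r' → ∀ a ∈ evenOdd r.2.1 r.2.2,
          a ∈ evenOdd r'.2.1 r'.2.2 := by
        intro r hr r' hr' hrr a ha
        have h1 : b a ∈ K r' := hrr ▸ Finset.mem_image_of_mem b ha
        obtain ⟨c, hc, hca⟩ := Finset.mem_image.1 h1
        rwa [← hinj c a (hlt r' hr' c hc) (hlt r hr a ha) hca]
      exact fun a => ⟨aux s hs s' hs' hK a, aux s' hs' s hs hK.symm a⟩
    have hU : s.2.1 = s'.2.1 := Finset.ext fun i => by
      rw [← two_mul_mem_evenOdd s.2.1 s.2.2, hE, two_mul_mem_evenOdd]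
    have hV : s.2.2 = s'.2.2 := Finset.ext fun i => by
      rw [← two_mul_add_one_mem_evenOdd s.2.1 s.2.2, hE, two_mul_add_one_mem_evenOdd]
    have hu : s.1 = s'.1 := by
      rw [← (hS s hs).2.2.1, ← (hS s' hs').2.2.1, hU]
    obtain ⟨u, U, V⟩ := s
    obtain ⟨u', U', V'⟩ := s'
    simp only at hU hV hu
    subst hU hV hu
    rfl
end

section
/- For every q ≥ 2, n ≥ 1, t ≥ 1, and every x ∈ Z_q^n, the cardinality of the ball B̄(x;t) satisfies |B̄(x;t)| ≤ Σ_{v=0}^{⌊2t/3⌋} C(2(t−v), v) · |B(x;t−v)|, where C(·,·) denotes the binomial coefficient. -/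
/-- The ball of radius `t` around `x` with respect to the distance `tdist`. -/
noncomputable def BallBar {n q : ℕ} (t : ℕ) (x : Fin n → Fin q) : Set (Fin n → Fin q) :=
  { y | tdist x y ≤ (t : ℕ∞) }

/-! ### Transpositions as a map on positions -/

/-- The permutation of positions induced by the disjoint transpositions at the locations `K`. -/
def swapPos (K : Finset ℕ) (i : ℕ) : ℕ :=
  if i ∈ K then i + 1 else if i ≠ 0 ∧ i - 1 ∈ K then i - 1 else i

/-- The result of applying the transpositions at `K` to `x`. Positions sent out of range, which do
not occur when `K` is valid, are left fixed. -/
def applySwaps {n q : ℕ} (K : Finset ℕ) (x : Fin n → Fin q) : Fin n → Fin q :=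
  fun i => if h : swapPos K i < n then x ⟨swapPos K i, h⟩ else x i

/-- Every location of `K` exchanges two distinct symbols of `x`. -/
def Reduced {n q : ℕ} (x : Fin n → Fin q) (K : Finset ℕ) : Prop :=
  ∀ k ∈ K, ∀ h : k + 1 < n, x ⟨k, by omega⟩ ≠ x ⟨k + 1, h⟩

/-- The locations adjacent to a location of `K`. Truncated subtraction may add the location `0`,
which is harmless since only an upper bound on the cardinality is used. -/
def nbhd (K : Finset ℕ) : Finset ℕ := K.image (· + 1) ∪ K.image (· - 1)

lemma card_nbhd_le (K : Finset ℕ) : (nbhd K).card ≤ 2 * K.card := by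
  have h1 := Finset.card_union_le (K.image (· + 1)) (K.image (· - 1))
  have h2 := Finset.card_image_le (s := K) (f := (· + 1))
  have h3 := Finset.card_image_le (s := K) (f := (· - 1))
  unfold nbhd
  omega

lemma ValidLocs.mono {n : ℕ} {K K' : Finset ℕ} (hK : ValidLocs n K) (h : K' ⊆ K) :
    ValidLocs n K' :=
  ⟨fun k hk => hK.1 k (h hk), fun k hk l hl => hK.2 k (h hk) l (h hl)⟩

lemma swapPos_lt {n : ℕ} {K : Finset ℕ} (hK : ValidLocs n K) {i : ℕ} (hi : i < n) :
    swapPos K i < n := by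
  unfold swapPos
  split_ifs with h1 h2
  · exact hK.1 i h1
  · omega
  · exact hi

lemma applySwaps_apply {n q : ℕ} {K : Finset ℕ} (hK : ValidLocs n K) (x : Fin n → Fin q)
    (i : Fin n) : applySwaps K x i = x ⟨swapPos K i, swapPos_lt hK i.2⟩ := by
  simp [applySwaps, swapPos_lt hK i.2]

lemma applyLocs_iff {n q : ℕ} {K : Finset ℕ} (hK : ValidLocs n K) (x y : Fin n → Fin q) :
    ApplyLocs K x y ↔ y = applySwaps K x := by
  rw [funext_iff]
  refine forall_congr' fun i => ?_
  rw [applySwaps_apply hK]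
  have : (if h : (i : ℕ) ∈ K ∧ (i : ℕ) + 1 < n then x ⟨(i : ℕ) + 1, h.2⟩
    else if (i : ℕ) ≠ 0 ∧ (i : ℕ) - 1 ∈ K then
      x ⟨(i : ℕ) - 1, lt_of_le_of_lt (Nat.sub_le _ _) i.isLt⟩
    else x i) = x ⟨swapPos K i, swapPos_lt hK i.2⟩ := by
    by_cases h1 : (i : ℕ) ∈ K
    · have := hK.1 i h1
      simp [swapPos, h1, this]
    · by_cases h2 : (i : ℕ) ≠ 0 ∧ (i : ℕ) - 1 ∈ K
      · simp [swapPos, h1, h2]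
      · simp only [swapPos, h1, h2, false_and, dite_false, if_false]
  rw [this]

lemma swapPos_swapPos {n : ℕ} {K : Finset ℕ} (hK : ValidLocs n K) (i : ℕ) :
    swapPos K (swapPos K i) = i := by
  have h1 := hK.2 i
  have h2 := hK.2 (i - 1)
  unfold swapPos
  grind

lemma applySwaps_applySwaps {n q : ℕ} {K : Finset ℕ} (hK : ValidLocs n K) (x : Fin n → Fin q) :
    applySwaps K (applySwaps K x) = x := by
  funext i
  simp [applySwaps_apply hK, swapPos_swapPos hK]

lemma applySwaps_congr {n q : ℕ} {K L K' L' : Finset ℕ} (hK : ValidLocs n K)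
    (hL : ValidLocs n L) (hK' : ValidLocs n K') (hL' : ValidLocs n L')
    (h : ∀ i, swapPos K (swapPos L i) = swapPos K' (swapPos L' i)) (x : Fin n → Fin q) :
    applySwaps L (applySwaps K x) = applySwaps L' (applySwaps K' x) := by
  funext i
  simp [applySwaps_apply hK, applySwaps_apply hL, applySwaps_apply hK', applySwaps_apply hL', h]

/-! ### Normalising a pair of location sets -/

lemma applySwaps_erase {n q : ℕ} {K : Finset ℕ} (hK : ValidLocs n K) (x : Fin n → Fin q)
    {k : ℕ} (hk : k ∈ K) (h : k + 1 < n) (hx : x ⟨k, by omega⟩ = x ⟨k + 1, h⟩) :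
    applySwaps (K.erase k) x = applySwaps K x := by
  funext i
  rw [applySwaps_apply hK, applySwaps_apply (hK.mono (Finset.erase_subset _ _))]
  obtain ⟨i, hi⟩ := i
  have h1 := hK.2 i
  have h2 := hK.2 k hk
  by_cases e1 : i = k
  · subst e1
    have : swapPos (K.erase i) i = i := by unfold swapPos; grind
    have h' : swapPos K i = i + 1 := by unfold swapPos; grind
    simp only [this, h', hx]
  · by_cases e2 : i = k + 1
    · subst e2
      have : swapPos (K.erase k) (k + 1) = k + 1 := by unfold swapPos; grind
      have h' : swapPos K (k + 1) = k := by unfold swapPos; grind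
      simp only [this, h', hx]
    · have : swapPos (K.erase k) i = swapPos K i := by unfold swapPos; grind
      simp only [this]

lemma swapPos_left {n : ℕ} {A : Finset ℕ} (hA : ValidLocs n A) {l : ℕ} (hl : l ∈ A) :
    swapPos A l = l + 1 ∧ swapPos (A.erase l) l = l := by
  have := hA.2 l hl
  unfold swapPos
  grind

lemma swapPos_right {n : ℕ} {A : Finset ℕ} (hA : ValidLocs n A) {l : ℕ} (hl : l ∈ A) :
    swapPos A (l + 1) = l ∧ swapPos (A.erase l) (l + 1) = l + 1 := by
  have := hA.2 l hl
  unfold swapPos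
  grind

lemma swapPos_erase_of_ne (A : Finset ℕ) {l j : ℕ} (h1 : j ≠ l) (h2 : j ≠ l + 1) :
    swapPos (A.erase l) j = swapPos A j := by
  unfold swapPos
  grind

/-- For `l ∈ L`, the involution `swapPos L` exchanges `l` and `l + 1`, so it sends no other
position there. -/
lemma swapPos_avoid {n : ℕ} {L : Finset ℕ} (hL : ValidLocs n L) {l i : ℕ} (hl : l ∈ L)
    (h1 : i ≠ l) (h2 : i ≠ l + 1) : swapPos L i ≠ l ∧ swapPos L i ≠ l + 1 := by
  refine ⟨fun h => h2 ?_, fun h => h1 ?_⟩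
  · rw [← swapPos_swapPos hL i, h, (swapPos_left hL hl).1]
  · rw [← swapPos_swapPos hL i, h, (swapPos_right hL hl).1]

lemma swapPos_cancel {n : ℕ} {K L : Finset ℕ} (hK : ValidLocs n K) (hL : ValidLocs n L) {l : ℕ}
    (hlK : l ∈ K) (hlL : l ∈ L) (i : ℕ) :
    swapPos K (swapPos L i) = swapPos (K.erase l) (swapPos (L.erase l) i) := by
  obtain ⟨a1, a2⟩ := swapPos_left hK hlK
  obtain ⟨b1, b2⟩ := swapPos_right hK hlK
  obtain ⟨c1, c2⟩ := swapPos_left hL hlL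
  obtain ⟨d1, d2⟩ := swapPos_right hL hlL
  by_cases e1 : i = l
  · rw [e1, c1, c2, b1, a2]
  by_cases e2 : i = l + 1
  · rw [e2, d1, d2, a1, b2]
  obtain ⟨h1, h2⟩ := swapPos_avoid hL hlL e1 e2
  rw [swapPos_erase_of_ne L e1 e2, swapPos_erase_of_ne K h1 h2]

lemma swapPos_move {n l : ℕ} {K L : Finset ℕ} (hK : ValidLocs n (insert l K)) (hL : ValidLocs n L)
    (hlL : l ∈ L) (hlK : l ∉ K) (i : ℕ) :
    swapPos K (swapPos L i) = swapPos (insert l K) (swapPos (L.erase l) i) := by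
  have hl := Finset.mem_insert_self l K
  have he : (insert l K).erase l = K := Finset.erase_insert hlK
  obtain ⟨a1, a2⟩ := swapPos_left hK hl
  obtain ⟨b1, b2⟩ := swapPos_right hK hl
  obtain ⟨c1, c2⟩ := swapPos_left hL hlL
  obtain ⟨d1, d2⟩ := swapPos_right hL hlL
  rw [he] at a2 b2
  by_cases e1 : i = l
  · rw [e1, c1, c2, a1, b2]
  by_cases e2 : i = l + 1
  · rw [e2, d1, d2, b1, a2]
  obtain ⟨h1, h2⟩ := swapPos_avoid hL hlL e1 e2
  rw [swapPos_erase_of_ne L e1 e2, ← swapPos_erase_of_ne (insert l K) h1 h2, he]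

/-- A pair of location sets can be normalised so that the first set exchanges only distinct
symbols and every location of the second set is adjacent to one of the first. -/
lemma exists_normal_pair {n q : ℕ} (x : Fin n → Fin q) (N : ℕ) :
    ∀ K L : Finset ℕ, ValidLocs n K → ValidLocs n L → K.card + 2 * L.card ≤ N →
      ∃ K' L' : Finset ℕ, ValidLocs n K' ∧ Reduced x K' ∧ L' ⊆ nbhd K' ∧
        K'.card + L'.card ≤ K.card + L.card ∧
        applySwaps L' (applySwaps K' x) = applySwaps L (applySwaps K x) := by
  induction N with
  | zero =>
    intro K L hK hL h
    have hK0 : K = ∅ := by rw [← Finset.card_eq_zero]; omega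
    have hL0 : L = ∅ := by rw [← Finset.card_eq_zero]; omega
    subst hK0 hL0
    exact ⟨∅, ∅, hK, by simp [Reduced], by simp, le_rfl, rfl⟩
  | succ N ih =>
    intro K L hK hL hN
    by_cases hred : Reduced x K
    · by_cases hsub : L ⊆ nbhd K
      · exact ⟨K, L, hK, hred, hsub, le_rfl, rfl⟩
      · obtain ⟨l, hlL, hl⟩ := Finset.not_subset.mp hsub
        have hLe := hL.mono (Finset.erase_subset l L)
        have cL := Finset.card_erase_add_one hlL
        by_cases hlK : l ∈ K
        · have hKe := hK.mono (Finset.erase_subset l K)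
          have cK := Finset.card_erase_add_one hlK
          obtain ⟨K', L', a, b, c, d, e⟩ := ih _ _ hKe hLe (by omega)
          exact ⟨K', L', a, b, c, by omega, e.trans
            (applySwaps_congr hK hL hKe hLe (swapPos_cancel hK hL hlK hlL) x).symm⟩
        · have far : ∀ k ∈ K, k + 2 ≤ l ∨ l + 2 ≤ k := by
            intro k hk
            by_contra hc
            have h3 : k ≠ l := fun h => hlK (h ▸ hk)
            apply hl
            simp only [nbhd, Finset.mem_union, Finset.mem_image]
            by_cases h4 : k < l
            · exact Or.inl ⟨k, hk, by omega⟩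
            · exact Or.inr ⟨k, hk, by omega⟩
          have hKi : ValidLocs n (insert l K) := by
            have h1 := hL.1 l hlL
            have h2 := hK.1
            have h3 := hK.2
            constructor
            · grind
            · grind
          have cK := Finset.card_insert_of_notMem hlK
          obtain ⟨K', L', a, b, c, d, e⟩ := ih _ _ hKi hLe (by omega)
          exact ⟨K', L', a, b, c, by omega, e.trans
            (applySwaps_congr hK hL hKi hLe (swapPos_move hKi hL hlL hlK) x).symm⟩
    · unfold Reduced at hred
      push Not at hred
      obtain ⟨k, hk, h, hx⟩ := hred
      have hKe := hK.mono (Finset.erase_subset k K)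
      have cK := Finset.card_erase_add_one hk
      obtain ⟨K', L', a, b, c, d, e⟩ := ih _ _ hKe hL (by omega)
      exact ⟨K', L', a, b, c, by omega, by rw [e, applySwaps_erase hK x hk h hx]⟩

/-! ### Uniqueness of reduced location sets -/

/-- A location set exchanging only distinct symbols is determined by the resulting string: at the
smallest location belonging to just one of two such sets, the results differ. -/
lemma reduced_inj {n q : ℕ} {x : Fin n → Fin q} {K K' : Finset ℕ} (hK : ValidLocs n K)
    (hK' : ValidLocs n K') (rK : Reduced x K) (rK' : Reduced x K')
    (h : applySwaps K x = applySwaps K' x) : K = K' := by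
  have key : ∀ A A' : Finset ℕ, ValidLocs n A → ValidLocs n A' → Reduced x A →
      applySwaps A x = applySwaps A' x → ∀ i, (∀ j < i, j ∈ A ↔ j ∈ A') → i ∈ A → i ∈ A' := by
    intro A A' hA hA' rA hEq i hj hi
    by_contra hi'
    have hlt := hA.1 i hi
    have e := congrFun hEq ⟨i, by omega⟩
    rw [applySwaps_apply hA, applySwaps_apply hA'] at e
    have h1 : swapPos A i = i + 1 := by simp [swapPos, hi]
    have h2 : swapPos A' i = i := by
      have h3 := hA.2 i hi (i - 1)
      have h4 := hj (i - 1)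
      unfold swapPos
      grind
    simp only [h1, h2] at e
    exact rA i hi hlt e.symm
  ext i
  induction i using Nat.strong_induction_on with
  | _ i ih =>
    exact ⟨key K K' hK hK' rK h i ih, key K' K hK' hK rK' h.symm i fun j hj => (ih j hj).symm⟩

/-! ### Counting -/

lemma exists_pair_of_mem_ballBar {n q t : ℕ} {x y : Fin n → Fin q} (hy : y ∈ BallBar t x) :
    ∃ K L : Finset ℕ, ValidLocs n K ∧ ValidLocs n L ∧ K.card + L.card ≤ t ∧
      y = applySwaps L (applySwaps K x) := by
  have hy' : tdist x y ≤ (t : ℕ∞) := hy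
  unfold tdist at hy'
  set S := { d : ℕ∞ | ∃ t s : ℕ, d = ((t + s : ℕ) : ℕ∞) ∧ (BallB t x ∩ BallB s y).Nonempty }
    with hS
  have hne : S.Nonempty := by
    rw [Set.nonempty_iff_ne_empty]
    intro h
    rw [h, sInf_empty] at hy'
    simp at hy'
  obtain ⟨a, b, hab, z, ⟨K, cK, hK, eK⟩, ⟨L, cL, hL, eL⟩⟩ := csInf_mem hne
  rw [hab] at hy'
  have hle : a + b ≤ t := by exact_mod_cast hy'
  rw [applyLocs_iff hK] at eK
  rw [applyLocs_iff hL] at eL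
  refine ⟨K, L, hK, hL, by omega, ?_⟩
  rw [← eK, eL, applySwaps_applySwaps hL]

open Classical in
/-- The valid location sets of size at most `s` that exchange only distinct symbols of `x`. -/
noncomputable def reducedSets {n q : ℕ} (x : Fin n → Fin q) (s : ℕ) : Finset (Finset ℕ) :=
  (Finset.range n).powerset.filter fun K => ValidLocs n K ∧ Reduced x K ∧ K.card ≤ s

lemma card_reducedSets_le {n q : ℕ} (x : Fin n → Fin q) (s : ℕ) :
    (reducedSets x s).card ≤ (BallB s x).ncard := by
  rw [← Set.ncard_coe_finset]
  refine Set.ncard_le_ncard_of_injOn (fun K => applySwaps K x) ?_ ?_ (Set.toFinite _)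
  · intro K hK
    simp only [reducedSets, Finset.coe_filter, Set.mem_ofPred_eq] at hK
    exact ⟨K, hK.2.2.2, hK.2.1, (applyLocs_iff hK.2.1 _ _).2 rfl⟩
  · intro K hK K' hK' h
    simp only [reducedSets, Finset.coe_filter, Set.mem_ofPred_eq] at hK hK'
    exact reduced_inj hK.2.1 hK'.2.1 hK.2.2.1 hK'.2.2.1 h

theorem stmt10 (q n t : ℕ) (hq : 2 ≤ q) (hn : 1 ≤ n) (ht : 1 ≤ t)
    (x : Fin n → Fin q) :
    (BallBar t x).ncard ≤
      ∑ v ∈ Finset.range (2 * t / 3 + 1),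
        Nat.choose (2 * (t - v)) v * (BallB (t - v) x).ncard := by
  classical
  let F : Finset (Fin n → Fin q) := (Finset.range (2 * t / 3 + 1)).biUnion fun v =>
    (reducedSets x (t - v)).biUnion fun K =>
      ((nbhd K).powersetCard v).image fun L => applySwaps L (applySwaps K x)
  have hsub : BallBar t x ⊆ (F : Set (Fin n → Fin q)) := by
    intro y hy
    obtain ⟨K₀, L₀, hK₀, hL₀, hc, rfl⟩ := exists_pair_of_mem_ballBar hy
    obtain ⟨K, L, hK, rK, hL, hc', e⟩ := exists_normal_pair x _ K₀ L₀ hK₀ hL₀ le_rfl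
    have h1 := Finset.card_le_card hL
    have h2 := card_nbhd_le K
    simp only [F, Finset.mem_coe, Finset.mem_biUnion, Finset.mem_image, Finset.mem_range,
      Finset.mem_powersetCard, reducedSets, Finset.mem_filter, Finset.mem_powerset]
    refine ⟨L.card, by omega, K, ⟨?_, hK, rK, by omega⟩, L, ⟨hL, rfl⟩, e⟩
    intro k hk
    have := hK.1 k hk
    simp only [Finset.mem_range]
    omega
  calc (BallBar t x).ncard ≤ F.card := by
        rw [← Set.ncard_coe_finset]
        exact Set.ncard_le_ncard hsub (Finset.finite_toSet F)
    _ ≤ _ := by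
        refine Finset.card_biUnion_le.trans (Finset.sum_le_sum fun v _ => ?_)
        refine (Finset.card_biUnion_le_card_mul _ _ (Nat.choose (2 * (t - v)) v) ?_).trans ?_
        · intro K hK
          refine Finset.card_image_le.trans ?_
          rw [Finset.card_powersetCard]
          have hK' : K.card ≤ t - v := (Finset.mem_filter.mp hK).2.2.2
          have := card_nbhd_le K
          exact Nat.choose_le_choose v (by omega)
        · rw [mul_comm]
          exact Nat.mul_le_mul_left _ (card_reducedSets_le x _)
end

section
/- In the binary case q = 2, liminf_{n→∞} [ M*_2(n;1) · n / 2^n ] ≥ 1; that is, M*_2(n;1) ≳ 2^n / n as n → ∞. -/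
/-- `M*_q(n;t)`: the maximum cardinality of a code in `Z_q^n` correcting `t` transpositions. -/
noncomputable def Mstar (q n t : ℕ) : ℕ :=
  sSup { m : ℕ | ∃ C : Finset (Fin n → Fin q),
    C.Nonempty ∧ Corrects t (↑C : Set (Fin n → Fin q)) ∧ C.card = m }

namespace TranspositionCode

/-! ### Prefix sums and the checksum -/

/-- The symbol of `x` at position `i` as an integer, extended by `0` beyond the length. -/
def sym {n : ℕ} (x : Fin n → Fin 2) (i : ℕ) : ℤ :=
  if h : i < n then ((x ⟨i, h⟩ : ℕ) : ℤ) else 0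

/-- The number of ones among the first `j` symbols of `x`. -/
def pre {n : ℕ} (x : Fin n → Fin 2) (j : ℕ) : ℤ := ∑ i ∈ Finset.range j, sym x i

/-- The checksum `∑ j < n, P j * (P j + 1)`, with `P j` the number of ones among the first `j`
symbols. -/
def checksum {n : ℕ} (x : Fin n → Fin 2) : ℤ :=
  ∑ j ∈ Finset.range n, pre x j * (pre x j + 1)

lemma sym_cases {n : ℕ} (x : Fin n → Fin 2) (i : ℕ) : sym x i = 0 ∨ sym x i = 1 := by
  unfold sym
  split_ifs with h
  · have := (x ⟨i, h⟩).isLt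
    omega
  · simp

lemma pre_succ {n : ℕ} (x : Fin n → Fin 2) (j : ℕ) : pre x (j + 1) = pre x j + sym x j := by
  simp [pre, Finset.sum_range_succ]

lemma pre_mono {n : ℕ} (x : Fin n → Fin 2) : Monotone (pre x) := by
  apply monotone_nat_of_le_succ
  intro j
  rw [pre_succ]
  rcases sym_cases x j with h | h <;> omega

lemma pre_nonneg {n : ℕ} (x : Fin n → Fin 2) (j : ℕ) : 0 ≤ pre x j := by
  have := pre_mono x (Nat.zero_le j)
  simpa [pre] using this

lemma sym_injective {n : ℕ} {x x' : Fin n → Fin 2} (h : ∀ j, sym x j = sym x' j) : x = x' := by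
  funext i
  have := h i
  simp only [sym, i.isLt, dite_true] at this
  apply Fin.ext
  exact_mod_cast this

lemma pre_injective {n : ℕ} {x x' : Fin n → Fin 2} (h : ∀ j, pre x j = pre x' j) : x = x' := by
  apply sym_injective
  intro j
  have h1 := h (j + 1)
  rw [pre_succ, pre_succ, h j] at h1
  omega

lemma sym_apply {n k : ℕ} (hk : k + 1 < n) {x y : Fin n → Fin 2} (h : ApplyLocs {k} x y) (i : ℕ) :
    sym y i = if i = k then sym x (k + 1) else if i = k + 1 then sym x k else sym x i := by
  by_cases hi : i < n
  · have h1 := h ⟨i, hi⟩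
    simp only [Finset.mem_singleton] at h1
    have h2 : sym y i = ((y ⟨i, hi⟩ : ℕ) : ℤ) := by simp [sym, hi]
    rw [h2, h1]
    by_cases h3 : i = k
    · subst h3
      simp [sym, hk]
    · by_cases h4 : i = k + 1
      · subst h4
        simp [sym, (by omega : k < n)]
      · have : ¬ (i ≠ 0 ∧ i - 1 = k) := by omega
        simp [sym, hi, h3, h4, this]
  · rw [if_neg (by omega), if_neg (by omega)]
    simp [sym, hi]

lemma ball_cases {n : ℕ} {x y : Fin n → Fin 2} (h : y ∈ BallB 1 x) :
    y = x ∨ ∃ k, k + 1 < n ∧ ApplyLocs {k} x y := by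
  obtain ⟨K, hc, hv, ha⟩ := h
  rcases Finset.card_le_one_iff_subset_singleton.1 hc with ⟨k, hk⟩
  rcases Finset.subset_singleton_iff.1 hk with rfl | rfl
  · left
    funext i
    simpa using ha i
  · right
    exact ⟨k, hv.1 k (by simp), ha⟩

/-- A transposition at `k` alters only the prefix sum at `k + 1`. -/
lemma applyLocs_prefix {n k : ℕ} (hk : k + 1 < n) {x y : Fin n → Fin 2} (h : ApplyLocs {k} x y)
    (j : ℕ) : pre x j = pre y j + if j = k + 1 then sym y (k + 1) - sym y k else 0 := by
  induction j with
  | zero => simp [pre]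
  | succ j ih =>
    have hs := sym_apply hk h
    have e1 := hs k
    have e2 := hs (k + 1)
    have e3 := hs j
    simp at e1 e2
    rw [pre_succ, pre_succ, ih, e3]
    by_cases a : j = k
    · subst a
      simp [e1, e2]
    · by_cases b : j = k + 1
      · subst b
        simp
        omega
      · simp [a, b]

/-- A nontrivial transposition in terms of its result `y`: the `r`-th one of `y`, where
`r = pre y (k + 2)`, has been moved right (`d = 1`) or left (`d = -1`). -/
lemma ball_step {n : ℕ} {x y : Fin n → Fin 2} (h : y ∈ BallB 1 x) :
    x = y ∨ ∃ k d, k + 1 < n ∧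
      (d = 1 ∧ sym y k = 0 ∧ sym y (k + 1) = 1 ∨ d = -1 ∧ sym y k = 1 ∧ sym y (k + 1) = 0) ∧
      ∀ j, pre x j = pre y j + if j = k + 1 then d else 0 := by
  rcases ball_cases h with h | ⟨k, hk, ha⟩
  · exact Or.inl h.symm
  have hp := applyLocs_prefix hk ha
  by_cases he : sym y k = sym y (k + 1)
  · left
    apply pre_injective
    intro j
    rw [hp j, he]
    simp
  · right
    refine ⟨k, sym y (k + 1) - sym y k, hk, ?_, hp⟩
    rcases sym_cases y k with h1 | h1 <;> rcases sym_cases y (k + 1) with h2 | h2 <;>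
      simp [h1, h2] at he ⊢

lemma checksum_step {n k : ℕ} {d : ℤ} {x y : Fin n → Fin 2} (hk : k + 1 < n)
    (hd : d = 1 ∧ sym y k = 0 ∧ sym y (k + 1) = 1 ∨ d = -1 ∧ sym y k = 1 ∧ sym y (k + 1) = 0)
    (hp : ∀ j, pre x j = pre y j + if j = k + 1 then d else 0) :
    checksum x = checksum y + 2 * (d * pre y (k + 2)) ∧
      1 ≤ pre y (k + 2) ∧ pre y (k + 2) ≤ pre y n ∧ pre x n = pre y n := by
  have e1 := pre_succ y k
  have e2 := pre_succ y (k + 1)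
  have e0 := pre_nonneg y k
  refine ⟨?_, ?_, pre_mono y (by omega), ?_⟩
  · have : ∀ j, pre x j * (pre x j + 1) =
        pre y j * (pre y j + 1) + if j = k + 1 then 2 * (d * pre y (k + 2)) else 0 := by
      intro j
      rw [hp j]
      split_ifs with hj
      · subst hj
        rw [show k + 2 = k + 1 + 1 from rfl, e2]
        rcases hd with ⟨rfl, -, h⟩ | ⟨rfl, -, h⟩ <;> rw [h] <;> ring
      · simp
    unfold checksum
    rw [Finset.sum_congr rfl (fun j _ => this j), Finset.sum_add_distrib]
    simp [hk]
  · rw [show k + 2 = k + 1 + 1 from rfl]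
    rcases hd with ⟨-, h, h'⟩ | ⟨-, h, h'⟩ <;> omega
  · rw [hp n, if_neg (by omega), add_zero]

/-- The rank of the moved one and the direction of its move determine the location. -/
lemma loc_unique {n k l : ℕ} {d : ℤ} {y : Fin n → Fin 2}
    (hd : d = 1 ∧ sym y k = 0 ∧ sym y (k + 1) = 1 ∨ d = -1 ∧ sym y k = 1 ∧ sym y (k + 1) = 0)
    (hd' : d = 1 ∧ sym y l = 0 ∧ sym y (l + 1) = 1 ∨ d = -1 ∧ sym y l = 1 ∧ sym y (l + 1) = 0)
    (hr : pre y (k + 2) = pre y (l + 2)) : ¬ k < l := by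
  intro hkl
  have e1 := pre_succ y l
  have e2 := pre_succ y (l + 1)
  have e3 := pre_mono y (show k + 2 ≤ l + 1 by omega)
  rw [show l + 1 + 1 = l + 2 from rfl] at e2
  rcases hd with ⟨rfl, h1, h2⟩ | ⟨rfl, h1, h2⟩
  · rcases hd' with ⟨-, h3, h4⟩ | ⟨h, -⟩
    · omega
    · omega
  · rcases hd' with ⟨h, -⟩ | ⟨-, h3, h4⟩
    · omega
    · have : l ≠ k + 1 := by
        rintro rfl
        omega
      have e4 := pre_mono y (show k + 2 ≤ l by omega)
      omega

lemma eq_zero_of_dvd_two_mul {w z : ℤ} (h : 2 * w + 1 ∣ 2 * z) (h1 : -(2 * w) ≤ z)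
    (h2 : z ≤ 2 * w) : z = 0 := by
  have h3 : 2 * w + 1 ∣ z := by
    have : z = (2 * w + 1) * z - w * (2 * z) := by ring
    rw [this]
    exact dvd_sub (dvd_mul_right _ _) (h.mul_left _)
  exact Int.eq_zero_of_abs_lt_dvd h3 (abs_lt.2 ⟨by omega, by omega⟩)

/-- Strings of equal weight `w` with checksums congruent modulo `2 * w + 1` have disjoint balls
of radius one, unless they are equal. -/
lemma ball_disjoint {n : ℕ} {x x' y : Fin n → Fin 2} (hw : pre x n = pre x' n)
    (hs : 2 * pre x n + 1 ∣ checksum x - checksum x') (h : y ∈ BallB 1 x) (h' : y ∈ BallB 1 x') :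
    x = x' := by
  rcases ball_step h with rfl | ⟨k, d, hk, hd, hp⟩ <;>
    rcases ball_step h' with rfl | ⟨l, d', hl, hd', hp'⟩
  · rfl
  · exfalso
    obtain ⟨c, r1, r2, -⟩ := checksum_step hl hd' hp'
    have e : checksum x - checksum x' = 2 * (-(d' * pre x (l + 2))) := by rw [c]; ring
    rw [e] at hs
    have := eq_zero_of_dvd_two_mul hs
    rcases hd' with ⟨rfl, -⟩ | ⟨rfl, -⟩ <;> omega
  · exfalso
    obtain ⟨c, r1, r2, -⟩ := checksum_step hk hd hp
    have e : checksum x - checksum x' = 2 * (d * pre x' (k + 2)) := by rw [c]; ring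
    rw [e, hw] at hs
    have := eq_zero_of_dvd_two_mul hs
    rcases hd with ⟨rfl, -⟩ | ⟨rfl, -⟩ <;> omega
  · obtain ⟨c, r1, r2, r3⟩ := checksum_step hk hd hp
    obtain ⟨c', r1', r2', -⟩ := checksum_step hl hd' hp'
    have e : checksum x - checksum x' = 2 * (d * pre y (k + 2) - d' * pre y (l + 2)) := by
      rw [c, c']; ring
    rw [e, r3] at hs
    have hz := eq_zero_of_dvd_two_mul hs
    have hdd : d = d' ∧ pre y (k + 2) = pre y (l + 2) := by
      rcases hd with ⟨rfl, -⟩ | ⟨rfl, -⟩ <;> rcases hd' with ⟨rfl, -⟩ | ⟨rfl, -⟩ <;> omega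
    obtain ⟨rfl, hr⟩ := hdd
    have h1 := loc_unique hd hd' hr
    have h2 := loc_unique hd' hd hr.symm
    obtain rfl : k = l := by omega
    apply pre_injective
    intro j
    rw [hp', hp]

/-! ### The lower bound -/

/-- The Hamming weight of a binary string. -/
def wt {n : ℕ} (x : Fin n → Fin 2) : ℕ := ∑ i, (x i : ℕ)

lemma pre_length {n : ℕ} (x : Fin n → Fin 2) : pre x n = wt x := by
  unfold pre wt
  rw [Finset.sum_range]
  push_cast
  apply Finset.sum_congr rfl
  intro i _
  simp [sym]

lemma wt_rev {n : ℕ} (x : Fin n → Fin 2) : wt x + wt (fun i => (x i).rev) = n := by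
  unfold wt
  rw [← Finset.sum_add_distrib]
  rw [Finset.sum_congr rfl (g := fun _ => 1)]
  · simp
  · intro i _
    rw [Fin.val_rev]
    have := (x i).isLt
    omega

lemma mstar_set_bdd (n : ℕ) : BddAbove { m : ℕ | ∃ C : Finset (Fin n → Fin 2),
    C.Nonempty ∧ Corrects 1 (↑C : Set (Fin n → Fin 2)) ∧ C.card = m } := by
  refine ⟨Fintype.card (Fin n → Fin 2), ?_⟩
  rintro m ⟨C, -, -, rfl⟩
  exact Finset.card_le_univ C

lemma sum_inv_wt (n : ℕ) :
    (2 : ℝ) ^ n / (n + 1) ≤ ∑ x : Fin n → Fin 2, (1 : ℝ) / (2 * wt x + 1) := by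
  let e : (Fin n → Fin 2) ≃ (Fin n → Fin 2) := Equiv.piCongrRight fun _ => Fin.revPerm
  have h1 : ∑ x : Fin n → Fin 2, (1 : ℝ) / (2 * wt (e x) + 1) =
      ∑ x : Fin n → Fin 2, (1 : ℝ) / (2 * wt x + 1) :=
    Equiv.sum_comp e (fun x => (1 : ℝ) / (2 * wt x + 1))
  have h2 : ∑ x : Fin n → Fin 2, (2 : ℝ) / (n + 1) ≤
      ∑ x : Fin n → Fin 2, ((1 : ℝ) / (2 * wt x + 1) + (1 : ℝ) / (2 * wt (e x) + 1)) := by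
    apply Finset.sum_le_sum
    intro x _
    have h3 : (wt x : ℝ) + wt (e x) = n := by exact_mod_cast wt_rev x
    have h4 : (0 : ℝ) ≤ wt x := by positivity
    have h5 : (0 : ℝ) ≤ wt (e x) := by positivity
    rw [← h3]
    generalize (wt x : ℝ) = a at *
    generalize (wt (e x) : ℝ) = b at *
    rw [div_add_div _ _ (by positivity) (by positivity), div_le_div_iff₀ (by positivity)
      (by positivity)]
    nlinarith [sq_nonneg (a - b)]
  rw [Finset.sum_add_distrib, h1] at h2
  simp at h2 ⊢
  have : (2 : ℝ) ^ n * (2 / (n + 1)) = 2 * (2 ^ n / (n + 1)) := by ring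
  linarith

/-- Among the strings of weight `w`, some checksum residue modulo `2 * w + 1` is at least as
frequent as the average. -/
lemma exists_residue (n w : ℕ) : ∃ a : ℤ,
    ((Finset.univ.filter fun x : Fin n → Fin 2 => wt x = w).card : ℝ) / (2 * w + 1) ≤
    ((Finset.univ.filter fun x : Fin n → Fin 2 =>
      wt x = w ∧ checksum x % (2 * w + 1) = a).card : ℝ) := by
  obtain ⟨a, -, ha⟩ := Finset.exists_le_card_fiber_of_nsmul_le_card_of_maps_to
    (s := Finset.univ.filter fun x : Fin n → Fin 2 => wt x = w)
    (t := Finset.Ico (0 : ℤ) (2 * w + 1)) (f := fun x => checksum x % (2 * w + 1))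
    (b := ((Finset.univ.filter fun x : Fin n → Fin 2 => wt x = w).card : ℝ) / (2 * w + 1))
    (by
      intro x _
      rw [Finset.mem_Ico]
      exact ⟨Int.emod_nonneg _ (by omega), Int.emod_lt_of_pos _ (by omega)⟩)
    ⟨0, by rw [Finset.mem_Ico]; omega⟩
    (by
      have : (((2 * w + 1 : ℤ) - 0).toNat) = 2 * w + 1 := by omega
      rw [Int.card_Ico, this, nsmul_eq_mul]
      push_cast
      rw [mul_div_cancel₀ _ (by positivity)])
  refine ⟨a, ?_⟩
  rwa [Finset.filter_filter] at ha

lemma lower_bound (n : ℕ) : (2 : ℝ) ^ n / (n + 1) ≤ Mstar 2 n 1 := by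
  classical
  choose a ha using exists_residue n
  let C : Finset (Fin n → Fin 2) :=
    Finset.univ.filter fun x => checksum x % (2 * wt x + 1) = a (wt x)
  have hle : ∀ x : Fin n → Fin 2, wt x ∈ Finset.range (n + 1) := by
    intro x
    have := wt_rev x
    rw [Finset.mem_range]
    omega
  have hC : (2 : ℝ) ^ n / (n + 1) ≤ C.card := by
    refine (sum_inv_wt n).trans ?_
    rw [← Finset.sum_fiberwise_of_maps_to (fun x _ => hle x),
      Finset.card_eq_sum_card_fiberwise (f := wt) (t := Finset.range (n + 1)) (fun x _ => hle x)]
    push_cast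
    apply Finset.sum_le_sum
    intro w _
    have h1 : ∑ x : Fin n → Fin 2 with wt x = w, (1 : ℝ) / (2 * wt x + 1) =
        ∑ x : Fin n → Fin 2 with wt x = w, (1 : ℝ) / (2 * w + 1) := by
      apply Finset.sum_congr rfl
      intro x hx
      rw [(Finset.mem_filter.1 hx).2]
    rw [h1, Finset.sum_const, nsmul_eq_mul, mul_one_div]
    refine (ha w).trans (le_of_eq ?_)
    congr 2
    ext x
    simp only [C, Finset.mem_filter, Finset.mem_univ, true_and]
    constructor
    · rintro ⟨rfl, h⟩
      exact ⟨h, rfl⟩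
    · rintro ⟨h, rfl⟩
      exact ⟨rfl, h⟩
  refine hC.trans ?_
  have hpos : (0 : ℝ) < C.card := lt_of_lt_of_le (by positivity) hC
  -- Codewords of different weight cannot be confused: transpositions preserve the weight.
  have hcorr : Corrects 1 (↑C : Set (Fin n → Fin 2)) := by
    intro x hx x' hx' hne
    rw [Set.eq_empty_iff_forall_notMem]
    rintro y ⟨hy, hy'⟩
    have hwy : ∀ z : Fin n → Fin 2, y ∈ BallB 1 z → pre z n = pre y n := by
      intro z hz
      rcases ball_step hz with rfl | ⟨k, d, hk, hd, hp⟩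
      · rfl
      · exact (checksum_step hk hd hp).2.2.2
    have hw : pre x n = pre x' n := (hwy x hy).trans (hwy x' hy').symm
    apply hne
    refine ball_disjoint hw ?_ hy hy'
    have h1 : checksum x % (2 * wt x + 1) = a (wt x) := by simpa [C] using hx
    have h2 : checksum x' % (2 * wt x' + 1) = a (wt x') := by simpa [C] using hx'
    have h3 : wt x = wt x' := by
      rw [pre_length, pre_length] at hw
      exact_mod_cast hw
    rw [pre_length]
    rw [← h3] at h2
    exact (Int.ModEq.dvd (h2.trans h1.symm : checksum x' ≡ checksum x [ZMOD _]))
  have : C.card ≤ Mstar 2 n 1 := by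
    apply le_csSup (mstar_set_bdd n)
    refine ⟨C, ?_, hcorr, rfl⟩
    rw [← Finset.card_pos]
    exact_mod_cast hpos
  exact_mod_cast this

/-! ### The packing bound for even length -/

/-- The blocks `{2 * i, 2 * i + 1}` on which `x` takes two different symbols. -/
def mixed {m : ℕ} (x : Fin (2 * m) → Fin 2) : Finset (Fin m) :=
  Finset.univ.filter fun i => sym x (2 * i) ≠ sym x (2 * i + 1)

/-- `x` with block `i` reversed, or `x` itself for `none`. -/
def flipBlock {m : ℕ} (x : Fin (2 * m) → Fin 2) : Option (Fin m) → (Fin (2 * m) → Fin 2)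
  | none => x
  | some i => fun j => x (Equiv.swap ⟨2 * i, by omega⟩ ⟨2 * i + 1, by omega⟩ j)

lemma flipBlock_apply {m : ℕ} (x : Fin (2 * m) → Fin 2) (i : Fin m) :
    ApplyLocs {2 * (i : ℕ)} x (flipBlock x (some i)) := by
  intro j
  simp only [flipBlock, Finset.mem_singleton, Equiv.swap_apply_def, Fin.ext_iff]
  by_cases h1 : (j : ℕ) = 2 * i
  · rw [if_pos h1, dif_pos ⟨h1, by omega⟩]
    congr 1
    apply Fin.ext
    simp [h1]
  · rw [if_neg h1, dif_neg (by tauto)]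
    by_cases h2 : (j : ℕ) = 2 * i + 1
    · rw [if_pos h2, if_pos (by omega)]
      congr 1
      apply Fin.ext
      simp [h2]
    · rw [if_neg h2, if_neg (by omega)]

lemma flipBlock_mem {m : ℕ} (x : Fin (2 * m) → Fin 2) (o : Option (Fin m)) :
    flipBlock x o ∈ BallB 1 x := by
  cases o with
  | none =>
    refine ⟨∅, by simp, by simp [ValidLocs], ?_⟩
    intro i
    simp [flipBlock]
  | some i =>
    refine ⟨{2 * (i : ℕ)}, by simp, ⟨?_, ?_⟩, flipBlock_apply x i⟩
    · simp
      omega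
    · simp

lemma sym_flipBlock {m : ℕ} (x : Fin (2 * m) → Fin 2) (i : Fin m) (j : ℕ) :
    sym (flipBlock x (some i)) j = if j = 2 * i then sym x (2 * i + 1)
      else if j = 2 * i + 1 then sym x (2 * i) else sym x j :=
  sym_apply (by omega) (flipBlock_apply x i) j

lemma mixed_flipBlock {m : ℕ} (x : Fin (2 * m) → Fin 2) (o : Option (Fin m)) :
    mixed (flipBlock x o) = mixed x := by
  cases o with
  | none => rfl
  | some i =>
    ext l
    simp only [mixed, Finset.mem_filter, Finset.mem_univ, true_and, sym_flipBlock]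
    by_cases h : (l : ℕ) = i
    · simp [h, eq_comm]
    · rw [if_neg (by omega), if_neg (by omega), if_neg (by omega), if_neg (by omega)]

lemma flipBlock_injOn {m : ℕ} (x : Fin (2 * m) → Fin 2) :
    Set.InjOn (flipBlock x) (Finset.insertNone (mixed x) : Finset (Option (Fin m))) := by
  -- On a mixed block `i`, the strings `flipBlock x o` and `x` agree at `2 * i` unless `o = some i`.
  have key : ∀ i ∈ mixed x, ∀ o, flipBlock x (some i) = flipBlock x o → o = some i := by
    intro i hi o h
    have h1 := congrArg (fun z => sym z (2 * i)) h
    simp only [sym_flipBlock, if_true] at h1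
    have h2 : sym x (2 * i) ≠ sym x (2 * i + 1) := (Finset.mem_filter.1 hi).2
    cases o with
    | none => exact absurd h1.symm h2
    | some l =>
      rw [sym_flipBlock] at h1
      by_cases h3 : (i : ℕ) = l
      · rw [Fin.ext h3]
      · rw [if_neg (by omega), if_neg (by omega)] at h1
        exact absurd h1.symm h2
  intro o ho o' ho' h
  cases o with
  | some i => exact (key i (by simpa using ho) o' h).symm
  | none =>
    cases o' with
    | none => rfl
    | some i => exact key i (by simpa using ho') none h.symm

lemma sum_powerset_inv (m : ℕ) :
    ((m : ℝ) + 1) * ∑ S : Finset (Fin m), (1 : ℝ) / (S.card + 1) ≤ 2 ^ (m + 1) := by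
  have h := Finset.sum_powerset_apply_card (fun k => (1 : ℝ) / (k + 1))
    (x := (Finset.univ : Finset (Fin m)))
  rw [Finset.powerset_univ] at h
  rw [h, Finset.mul_sum, Finset.card_univ, Fintype.card_fin]
  have h2 : ∀ k ∈ Finset.range (m + 1),
      ((m : ℝ) + 1) * (m.choose k • ((1 : ℝ) / (k + 1))) = ((m + 1).choose (k + 1) : ℕ) := by
    intro k _
    have h3 : ((m : ℝ) + 1) * m.choose k = (m + 1).choose (k + 1) * (k + 1) := by
      exact_mod_cast Nat.add_one_mul_choose_eq m k
    rw [nsmul_eq_mul, ← mul_assoc, h3]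
    field_simp
  rw [Finset.sum_congr rfl h2]
  have h4 := Nat.sum_range_choose (m + 1)
  rw [Finset.sum_range_succ'] at h4
  have h5 : ∑ k ∈ Finset.range (m + 1), (m + 1).choose (k + 1) ≤ 2 ^ (m + 1) := by omega
  exact_mod_cast h5

/-- A string is determined by its mixed blocks and the first symbol of every block. -/
lemma sum_inv_mixed (m : ℕ) :
    ∑ y : Fin (2 * m) → Fin 2, (1 : ℝ) / ((mixed y).card + 1) ≤
      2 ^ m * ∑ S : Finset (Fin m), (1 : ℝ) / (S.card + 1) := by
  classical
  let g : (Fin (2 * m) → Fin 2) → Finset (Fin m) × (Fin m → Fin 2) :=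
    fun y => (mixed y, fun i => y ⟨2 * i, by omega⟩)
  have hg : Function.Injective g := by
    intro y z h
    have h1 : mixed y = mixed z := congrArg Prod.fst h
    have h2 : ∀ i : Fin m, sym y (2 * i) = sym z (2 * i) := by
      intro i
      have h3 := congrFun (congrArg Prod.snd h) i
      simp only [g] at h3
      have hi : 2 * (i : ℕ) < 2 * m := by omega
      simp [sym, h3]
    apply sym_injective
    intro j
    by_cases hj : j < 2 * m
    · let i : Fin m := ⟨j / 2, by omega⟩
      have h4 := h2 i
      have h5 : i ∈ mixed y ↔ i ∈ mixed z := by rw [h1]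
      simp only [mixed, Finset.mem_filter, Finset.mem_univ, true_and, i] at h4 h5
      rcases Nat.mod_two_eq_zero_or_one j with h6 | h6
      · rwa [show 2 * (j / 2) = j by omega] at h4
      · rw [show 2 * (j / 2) + 1 = j by omega] at h5
        have a1 := sym_cases y j
        have a2 := sym_cases z j
        have a3 := sym_cases y (2 * (j / 2))
        omega
    · simp [sym, hj]
  have h1 : ∑ y : Fin (2 * m) → Fin 2, (1 : ℝ) / ((mixed y).card + 1) =
      ∑ p ∈ Finset.univ.image g, (1 : ℝ) / (p.1.card + 1) := by
    rw [Finset.sum_image (fun _ _ _ _ h => hg h)]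
  rw [h1]
  refine (Finset.sum_le_sum_of_subset_of_nonneg (Finset.subset_univ _)
    (fun p _ _ => by positivity)).trans (le_of_eq ?_)
  rw [Fintype.sum_prod_type]
  simp [Finset.mul_sum]

lemma card_code_le {m : ℕ} (C : Finset (Fin (2 * m) → Fin 2))
    (hC : Corrects 1 (↑C : Set (Fin (2 * m) → Fin 2))) :
    (C.card : ℝ) ≤ ∑ y : Fin (2 * m) → Fin 2, (1 : ℝ) / ((mixed y).card + 1) := by
  classical
  let N : (Fin (2 * m) → Fin 2) → Finset (Fin (2 * m) → Fin 2) :=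
    fun c => (Finset.insertNone (mixed c)).image (flipBlock c)
  have hN : ∀ c, ∑ y ∈ N c, (1 : ℝ) / ((mixed y).card + 1) = 1 := by
    intro c
    rw [Finset.sum_image (flipBlock_injOn c)]
    simp only [mixed_flipBlock, Finset.sum_const, Finset.card_insertNone, nsmul_eq_mul]
    push_cast
    field_simp
  have hdisj : (C : Set (Fin (2 * m) → Fin 2)).PairwiseDisjoint N := by
    intro c hc c' hc' hne
    rw [Function.onFun, Finset.disjoint_left]
    intro y hy hy'
    obtain ⟨o, -, rfl⟩ := Finset.mem_image.1 hy
    obtain ⟨o', -, ho'⟩ := Finset.mem_image.1 hy'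
    have h1 := hC c hc c' hc' hne
    have h2 : flipBlock c o ∈ BallB 1 c ∩ BallB 1 c' :=
      ⟨flipBlock_mem c o, ho' ▸ flipBlock_mem c' o'⟩
    rw [h1] at h2
    exact h2
  calc (C.card : ℝ) = ∑ c ∈ C, ∑ y ∈ N c, (1 : ℝ) / ((mixed y).card + 1) := by
        simp only [hN]
        simp
    _ = ∑ y ∈ C.biUnion N, (1 : ℝ) / ((mixed y).card + 1) := (Finset.sum_biUnion hdisj).symm
    _ ≤ _ := Finset.sum_le_sum_of_subset_of_nonneg (Finset.subset_univ _)
        (fun p _ _ => by positivity)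

lemma upper_bound (m : ℕ) :
    (Mstar 2 (2 * m) 1 : ℝ) * (2 * m : ℕ) / 2 ^ (2 * m) ≤ 4 := by
  have hmem := Nat.sSup_mem (s := { k : ℕ | ∃ C : Finset (Fin (2 * m) → Fin 2),
    C.Nonempty ∧ Corrects 1 (↑C : Set (Fin (2 * m) → Fin 2)) ∧ C.card = k })
    ⟨1, {fun _ => 0}, by simp, by
      intro x hx x' hx' hne
      simp only [Finset.coe_singleton, Set.mem_singleton_iff] at hx hx'
      exact absurd (hx.trans hx'.symm) hne, by simp⟩ (mstar_set_bdd _)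
  obtain ⟨C, -, hC, hcard⟩ := hmem
  have h1 := (card_code_le C hC).trans (sum_inv_mixed m)
  have h2 := sum_powerset_inv m
  change C.card = Mstar 2 (2 * m) 1 at hcard
  rw [hcard] at h1
  rw [div_le_iff₀ (by positivity)]
  generalize ∑ S : Finset (Fin m), (1 : ℝ) / (S.card + 1) = T at h1 h2
  have h3 : (Mstar 2 (2 * m) 1 : ℝ) * (m + 1) ≤ 2 * 2 ^ (2 * m) := by
    calc (Mstar 2 (2 * m) 1 : ℝ) * (m + 1) ≤ 2 ^ m * T * (m + 1) := by gcongr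
      _ = 2 ^ m * ((m + 1) * T) := by ring
      _ ≤ 2 ^ m * 2 ^ (m + 1) := by gcongr
      _ = 2 * 2 ^ (2 * m) := by ring
  have h4 : (0 : ℝ) ≤ Mstar 2 (2 * m) 1 := by positivity
  push_cast
  nlinarith

end TranspositionCode

open TranspositionCode in
theorem stmt13 :
    1 ≤ Filter.liminf
      (fun n : ℕ => (Mstar 2 n 1 : ℝ) * n / 2 ^ n)
      Filter.atTop := by
  have hcob : Filter.IsCoboundedUnder (· ≥ ·) Filter.atTop
      (fun n : ℕ => (Mstar 2 n 1 : ℝ) * n / 2 ^ n) := by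
    apply Filter.IsCoboundedUnder.of_frequently_le (a := 4)
    rw [Filter.frequently_atTop]
    intro N
    exact ⟨2 * N, by omega, upper_bound N⟩
  apply le_of_forall_lt_imp_le_of_dense
  intro b hb
  apply Filter.le_liminf_of_le hcob
  have hlim : Filter.Tendsto (fun n : ℕ => (n : ℝ) / (n + 1)) Filter.atTop (nhds 1) :=
    tendsto_natCast_div_add_atTop 1
  filter_upwards [hlim.eventually (lt_mem_nhds hb)] with n hn
  refine hn.le.trans ?_
  have h := lower_bound n
  rw [le_div_iff₀ (by positivity)]
  calc (n : ℝ) / (n + 1) * 2 ^ n = 2 ^ n / (n + 1) * n := by ring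
    _ ≤ _ := by gcongr
end
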